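/- arXiv:2506.07071 — 3 statements merged into one kernel-verified Lean document; each statement's English description precedes it below -/
import Mathlib

section
/- Let (E,𝒞,r) be a semimatroid without loops. Then the sequence w_0(𝒞), w_1(𝒞), …, w_{r(𝒞)}(𝒞) of unsigned Whitney numbers of the first kind is unimodal: there exists an index 0 ≤ k ≤ r(𝒞) such that w_0(𝒞) ≤ … ≤ w_{k−1}(𝒞) ≤ w_k(𝒞) ≥ w_{k+1}(𝒞) ≥ … ≥ w_{r(𝒞)}(𝒞). -/
/-- A semimatroid on a finite ground set `E`: a nonempty, subset-closed collection `C`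
of "central" subsets of `E`, together with a rank function `r` satisfying (SR1)-(SR5). -/
structure Semimatroid (E : Type*) [DecidableEq E] [Fintype E] where
  C : Finset (Finset E)
  r : Finset E → ℕ
  C_nonempty : C.Nonempty
  mem_of_subset : ∀ ⦃X Y : Finset E⦄, X ∈ C → Y ⊆ X → Y ∈ C
  r_le_card : ∀ ⦃X : Finset E⦄, X ∈ C → r X ≤ X.card
  r_mono : ∀ ⦃X Y : Finset E⦄, X ∈ C → Y ∈ C → X ⊆ Y → r X ≤ r Y
  submodular : ∀ ⦃X Y : Finset E⦄, X ∈ C → Y ∈ C → X ∪ Y ∈ C →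
    r (X ∩ Y) + r (X ∪ Y) ≤ r X + r Y
  union_mem : ∀ ⦃X Y : Finset E⦄, X ∈ C → Y ∈ C → r X = r (X ∩ Y) → X ∪ Y ∈ C
  augment : ∀ ⦃X Y : Finset E⦄, X ∈ C → Y ∈ C → r X < r Y →
    ∃ e ∈ Y \ X, insert e X ∈ C

namespace Semimatroid

variable {E : Type*} [DecidableEq E] [Fintype E] (S : Semimatroid E)

/-- The rank `r(𝒞)` of the semimatroid: the common rank of the maximal central sets. -/
def rank : ℕ := S.C.sup S.r

/-- The closure of a central set `X`:
`cl X = {e ∈ E : X ∪ {e} ∈ 𝒞 and r (X ∪ {e}) = r X}`. -/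
def cl (X : Finset E) : Finset E :=
  Finset.univ.filter fun e => insert e X ∈ S.C ∧ S.r (insert e X) = S.r X

/-- The flats of the semimatroid: central sets `X` with `cl X = X`. -/
def flats : Finset (Finset E) := S.C.filter fun X => S.cl X = X

/-- The characteristic polynomial `χ(𝒞;t) = Σ_{X ∈ 𝒞} (−1)^{|X|} t^{r(𝒞)−r(X)}`. -/
noncomputable def charPoly : Polynomial ℤ :=
  ∑ A ∈ S.C, (-1 : Polynomial ℤ) ^ A.card * Polynomial.X ^ (S.rank - S.r A)

end Semimatroid

namespace Semimatroid

variable {E : Type*} [DecidableEq E] [Fintype E] (S : Semimatroid E)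

/-- The `i`-th unsigned Whitney number of the first kind:
`w_i(𝒞) = (−1)^i ⋅ (coefficient of t^{r(𝒞)−i} in χ(𝒞;t))`. -/
noncomputable def whitney (i : ℕ) : ℤ :=
  (-1 : ℤ) ^ i * S.charPoly.coeff (S.rank - i)

end Semimatroid

/-!
Coning turns the semimatroid into a loopless matroid with an apex, and `w_k` into the sum of
`|μ(∅, H)|` over the flats `H` of rank `k` avoiding the apex. By Weisner's recursion such a sum is
positive, and it is the mixed degree `β ^ k α ^ (r - k)` of two nef classes on the Bergman fan of
the matroid. Hence log-concavity, and with it unimodality, follows once the quadratic form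
`(x, y) ↦ deg (x y v₁ ⋯ v_s)` is Lorentzian for all nef `v₁, …, v_s`.

By induction on `s`, the form is a weighted sum of the forms of the stars of rays, each Lorentzian;
a Bochner-type inequality for symmetric matrices with a positive vector (in the role of an ample
class) then bounds the number of its positive eigenvalues by one. The base case `s = 0` concerns
stars of corank two, where either the flag has two gaps and the form is hyperbolic, or it has one
gap of rank three and points and lines of a rank three matroid give an explicit form.
-/

section LogConcave

variable {R : Type*} [CommRing R] [LinearOrder R] [IsStrictOrderedRing R]

theorem le_of_mul_le_sq_of_le {x y z : R} (hy : 0 ≤ y) (hz : 0 < z) (h : x * z ≤ y ^ 2)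
    (hyz : y ≤ z) : x ≤ y := by
  have hxz : x * z ≤ y * z := h.trans (by rw [sq]; gcongr)
  exact le_of_mul_le_mul_right hxz hz

theorem exists_monotoneOn_antitoneOn_of_mul_le_sq {a : ℕ → R} {n : ℕ}
    (hpos : ∀ k ≤ n, 0 < a k) (hlog : ∀ k, k + 2 ≤ n → a k * a (k + 2) ≤ a (k + 1) ^ 2) :
    ∃ k ≤ n, MonotoneOn a (Set.Iic k) ∧ AntitoneOn a (Set.Icc k n) := by
  have hex : ∃ k, n ≤ k ∨ a (k + 1) < a k := ⟨n, Or.inl le_rfl⟩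
  have hdesc : ∀ k, Nat.find hex ≤ k → k + 1 ≤ n → a (k + 1) ≤ a k := by
    intro k hk
    induction k, hk using Nat.le_induction with
    | base => exact fun hn => ((Nat.find_spec hex).resolve_left (by lia)).le
    | succ k _ ih =>
      intro hn
      exact le_of_mul_le_sq_of_le (hpos _ (by lia)).le (hpos k (by lia))
        (by rw [mul_comm]; exact hlog k hn) (ih (by lia))
  refine ⟨Nat.find hex, Nat.find_min' hex (Or.inl le_rfl),
    monotoneOn_of_le_add_one Set.ordConnected_Iic fun k _ _ hk => ?_,
    antitoneOn_of_add_one_le Set.ordConnected_Icc fun k _ hk hk' => hdesc k hk.1 hk'.2⟩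
  exact not_lt.1 (not_or.1 (Nat.find_min hex (Nat.lt_of_succ_le hk))).2

end LogConcave

section Perron

open Finset Matrix

theorem weightedLaplacian_summand_nonneg {ι : Type*} {A : Matrix ι ι ℝ} {c : ι → ℝ}
    (hnn : ∀ i j, i ≠ j → 0 ≤ A i j) (hc : ∀ i, 0 < c i) (y : ι → ℝ) (i j : ι) :
    0 ≤ A i j * (c i * c j * (y i / c i - y j / c j) ^ 2) := by
  rcases eq_or_ne i j with rfl | hij
  · simp
  · have := hnn i j hij
    have := hc i
    have := hc j
    positivity

variable {ι : Type*} [Fintype ι] {A : Matrix ι ι ℝ} {c : ι → ℝ}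

theorem exists_mulVec_eq_of_ker_le_span {L : Matrix ι ι ℝ} {b : ι → ℝ} (hc : c ᵥ* L = 0)
    (hker : ∀ y, L *ᵥ y = 0 → ∃ t : ℝ, y = t • c) (hb : c ⬝ᵥ b = 0) : ∃ y, L *ᵥ y = b := by
  have eq_of_perturbed : ∀ {y d}, c ⬝ᵥ d = 0 → (L + vecMulVec c c) *ᵥ y = d →
      c ⬝ᵥ y = 0 ∧ L *ᵥ y = d := by
    intro y d hd hy
    have hcy : (c ⬝ᵥ y) * (c ⬝ᵥ c) = 0 := by
      rw [← hd, ← hy, add_mulVec, dotProduct_add, dotProduct_mulVec, hc, vecMulVec_mulVec]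
      simp [mul_comm]
    have hcy : c ⬝ᵥ y = 0 := by
      rcases mul_eq_zero.1 hcy with h | h
      · exact h
      · simp [dotProduct_self_eq_zero.1 h]
    refine ⟨hcy, ?_⟩
    rw [← hy, add_mulVec, vecMulVec_mulVec, hcy]
    simp
  have hinj : Function.Injective (L + vecMulVec c c).mulVecLin := by
    refine (injective_iff_map_eq_zero _).2 fun y hy => ?_
    obtain ⟨hcy, hLy⟩ := eq_of_perturbed (dotProduct_zero c) hy
    obtain ⟨t, rfl⟩ := hker y hLy
    rw [dotProduct_smul, smul_eq_mul, mul_eq_zero, dotProduct_self_eq_zero] at hcy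
    rcases hcy with h | h <;> simp [h]
  obtain ⟨y, hy⟩ := LinearMap.injective_iff_surjective.1 hinj b
  exact ⟨y, (eq_of_perturbed hb hy).2⟩

section WeightedLaplacian

variable [DecidableEq ι]

/-- The Laplacian of a weighted graph with adjacency matrix `A`, with the diagonal chosen so that
its kernel contains `c` instead of the constant vectors. -/
noncomputable def weightedLaplacian (A : Matrix ι ι ℝ) (c : ι → ℝ) : Matrix ι ι ℝ :=
  diagonal ((A *ᵥ c) / c) - A

theorem weightedLaplacian_mulVec (y : ι → ℝ) (i : ι) :
    (weightedLaplacian A c *ᵥ y) i = (A *ᵥ c) i / c i * y i - (A *ᵥ y) i := by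
  simp [weightedLaplacian, sub_mulVec, mulVec_diagonal]

theorem vecMul_weightedLaplacian (hA : A.IsSymm) (hc : ∀ i, 0 < c i) :
    c ᵥ* weightedLaplacian A c = 0 := by
  ext i
  rw [weightedLaplacian, vecMul_sub, ← mulVec_transpose A, hA.eq]
  simp [vecMul_diagonal, mul_div_cancel₀ _ (hc i).ne']

theorem two_mul_dotProduct_weightedLaplacian (hA : A.IsSymm) (hc : ∀ i, 0 < c i) (y : ι → ℝ) :
    2 * (y ⬝ᵥ weightedLaplacian A c *ᵥ y) =
      ∑ i, ∑ j, A i j * (c i * c j * (y i / c i - y j / c j) ^ 2) := by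
  have expand : ∀ i j, A i j * (c i * c j * (y i / c i - y j / c j) ^ 2) =
      A i j * c j * (y i ^ 2 / c i) + A j i * c i * (y j ^ 2 / c j)
        - 2 * (y i * (A i j * y j)) := by
    intro i j
    have := (hc i).ne'
    have := (hc j).ne'
    rw [hA.apply i j]
    field_simp
    ring
  have diag : ∑ i, ∑ j, A i j * c j * (y i ^ 2 / c i) = ∑ i, y i * ((A *ᵥ c) i / c i * y i) := by
    refine sum_congr rfl fun i _ => ?_
    rw [← sum_mul, mulVec, dotProduct]
    ring
  have diag' : ∑ i, ∑ j, A j i * c i * (y j ^ 2 / c j) = ∑ i, y i * ((A *ᵥ c) i / c i * y i) :=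
    sum_comm.trans diag
  simp only [expand, sum_sub_distrib, sum_add_distrib, diag, diag', ← mul_sum, dotProduct,
    weightedLaplacian_mulVec, mul_sub]
  simp only [mulVec, dotProduct]
  ring

theorem dotProduct_weightedLaplacian_nonneg (hA : A.IsSymm) (hnn : ∀ i j, i ≠ j → 0 ≤ A i j)
    (hc : ∀ i, 0 < c i) (y : ι → ℝ) : 0 ≤ y ⬝ᵥ weightedLaplacian A c *ᵥ y := by
  have h := two_mul_dotProduct_weightedLaplacian hA hc y
  have := sum_nonneg fun i (_ : i ∈ univ) => sum_nonneg fun j (_ : j ∈ univ) =>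
    weightedLaplacian_summand_nonneg hnn hc y i j
  linarith

theorem exists_eq_smul_of_weightedLaplacian_mulVec_eq_zero (hA : A.IsSymm)
    (hnn : ∀ i j, i ≠ j → 0 ≤ A i j) (hc : ∀ i, 0 < c i)
    (hconn : ∀ z : ι → ℝ, (∀ i j, i ≠ j → 0 < A i j → z i = z j) → ∀ i j, z i = z j)
    {y : ι → ℝ} (hy : weightedLaplacian A c *ᵥ y = 0) : ∃ t : ℝ, y = t • c := by
  have hsum := two_mul_dotProduct_weightedLaplacian hA hc y
  rw [hy, dotProduct_zero, mul_zero, eq_comm, sum_eq_zero_iff_of_nonneg fun i _ =>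
    sum_nonneg fun j _ => weightedLaplacian_summand_nonneg hnn hc y i j] at hsum
  have hconst : ∀ i j, y i / c i = y j / c j := by
    refine hconn _ fun i j _ hij => ?_
    have hzero := (sum_eq_zero_iff_of_nonneg fun j _ =>
      weightedLaplacian_summand_nonneg hnn hc y i j).1 (hsum i (mem_univ i)) j (mem_univ j)
    simpa [hij.ne', (hc i).ne', (hc j).ne', sub_eq_zero] using hzero
  rcases isEmpty_or_nonempty ι with _ | ⟨⟨i₀⟩⟩
  · exact ⟨0, Subsingleton.elim _ _⟩
  · refine ⟨y i₀ / c i₀, funext fun i => ?_⟩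
    rw [Pi.smul_apply, smul_eq_mul, ← hconst i, div_mul_cancel₀ _ (hc i).ne']

theorem exists_weightedLaplacian_mulVec_eq (hA : A.IsSymm) (hnn : ∀ i j, i ≠ j → 0 ≤ A i j)
    (hc : ∀ i, 0 < c i)
    (hconn : ∀ z : ι → ℝ, (∀ i j, i ≠ j → 0 < A i j → z i = z j) → ∀ i j, z i = z j)
    {x : ι → ℝ} (hx : x ⬝ᵥ A *ᵥ c = 0) :
    ∃ y, weightedLaplacian A c *ᵥ y = (A *ᵥ c) / c * x := by
  refine exists_mulVec_eq_of_ker_le_span (vecMul_weightedLaplacian hA hc)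
    (fun _ => exists_eq_smul_of_weightedLaplacian_mulVec_eq_zero hA hnn hc hconn) ?_
  rw [← hx, dotProduct, dotProduct]
  refine sum_congr rfl fun i _ => ?_
  have := (hc i).ne'
  simp only [Pi.mul_apply, Pi.div_apply]
  field_simp

end WeightedLaplacian

theorem dotProduct_mulVec_nonpos_of_orthogonal (hA : A.IsSymm) (hnn : ∀ i j, i ≠ j → 0 ≤ A i j)
    (hc : ∀ i, 0 < c i) (hAc : ∀ i, 0 < (A *ᵥ c) i)
    (hbound : ∀ y, y ⬝ᵥ A *ᵥ y ≤ ∑ i, c i * (A *ᵥ y) i ^ 2 / (A *ᵥ c) i)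
    (hconn : ∀ z : ι → ℝ, (∀ i j, i ≠ j → 0 < A i j → z i = z j) → ∀ i j, z i = z j)
    {x : ι → ℝ} (hx : x ⬝ᵥ A *ᵥ c = 0) : x ⬝ᵥ A *ᵥ x ≤ 0 := by
  classical
  obtain ⟨y, hy⟩ := exists_weightedLaplacian_mulVec_eq hA hnn hc hconn hx
  obtain ⟨z, rfl⟩ : ∃ z, y = x + z := ⟨y - x, by abel⟩
  have hAy : ∀ i, (A *ᵥ (x + z)) i = (A *ᵥ c) i / c i * z i := by
    intro i
    have := congrFun hy i
    rw [weightedLaplacian_mulVec] at this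
    simp only [Pi.add_apply, Pi.mul_apply, Pi.div_apply] at this
    linarith
  have hAx : ∀ i, (A *ᵥ x) i = (A *ᵥ c) i / c i * z i - (A *ᵥ z) i := by
    intro i
    rw [← hAy i, mulVec_add, Pi.add_apply, add_sub_cancel_right]
  have hbound_y : (x + z) ⬝ᵥ A *ᵥ (x + z) ≤ ∑ i, z i * ((A *ᵥ c) i / c i * z i) := by
    refine (hbound _).trans_eq (sum_congr rfl fun i _ => ?_)
    have := (hc i).ne'
    have := (hAc i).ne'
    rw [hAy i]
    field_simp
  have hpsd := dotProduct_weightedLaplacian_nonneg hA hnn hc z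
  have hsymm : z ⬝ᵥ A *ᵥ x = x ⬝ᵥ A *ᵥ z := by
    rw [dotProduct_mulVec, ← mulVec_transpose, hA.eq, dotProduct_comm]
  have hzAx : z ⬝ᵥ A *ᵥ x = ∑ i, z i * ((A *ᵥ c) i / c i * z i) - z ⬝ᵥ A *ᵥ z := by
    simp only [dotProduct, hAx, mul_sub, sum_sub_distrib]
  simp only [dotProduct, weightedLaplacian_mulVec, mul_sub, sum_sub_distrib] at hpsd
  rw [mulVec_add, add_dotProduct, dotProduct_add, dotProduct_add] at hbound_y
  simp only [dotProduct] at hbound_y hsymm hzAx ⊢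
  linarith

end Perron

section Lorentzian

variable {K W : Type*} [Field K] [LinearOrder K] [IsStrictOrderedRing K] [AddCommGroup W]
  [Module K W]

/-- A symmetric bilinear form is Lorentzian if it satisfies the reverse Cauchy–Schwarz inequality
for every positive vector `v`, that is, if it has at most one positive eigenvalue. -/
def IsLorentzian (B : LinearMap.BilinForm K W) : Prop :=
  ∀ x v, 0 < B v v → B x x * B v v ≤ B x v ^ 2

theorem IsLorentzian.of_nonpos_of_orthogonal {B : LinearMap.BilinForm K W} (hB : B.IsSymm) {c : W}
    (h : ∀ x, B x c = 0 → B x x ≤ 0) : IsLorentzian B := by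
  intro x v hv
  have hvc : B v c ≠ 0 := fun h0 => (h v h0).not_gt hv
  have hz : B (B v c • x - B x c • v) (B v c • x - B x c • v) ≤ 0 := by
    refine h _ ?_
    simp only [map_sub, map_smul, LinearMap.sub_apply, LinearMap.smul_apply, smul_eq_mul]
    ring
  simp only [map_sub, map_smul, LinearMap.sub_apply, LinearMap.smul_apply, smul_eq_mul,
    hB.eq v x] at hz
  have hsq : (B v c) ^ 2 * (B x x * B v v - B x v ^ 2) ≤ 0 := by
    nlinarith [mul_nonpos_of_nonpos_of_nonneg hz hv.le, sq_nonneg (B x c * B v v - B v c * B x v)]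
  exact sub_nonpos.1 (nonpos_of_mul_nonpos_right hsq (by positivity))

end Lorentzian

section Fan

open Finset

/-- The rays by which a cone `σ` of a fan can be enlarged to another cone, where a fan is given by
the predicate telling which sets of rays span a cone. -/
noncomputable def linkOf {V : Type*} [DecidableEq V] [Fintype V] (IsCone : Finset V → Prop)
    (σ : Finset V) : Finset V :=
  open scoped Classical in univ.filter fun H => H ∉ σ ∧ IsCone (insert H σ)

@[simp]
theorem mem_linkOf {V : Type*} [DecidableEq V] [Fintype V] {IsCone : Finset V → Prop}
    {σ : Finset V} {H : V} : H ∈ linkOf IsCone σ ↔ H ∉ σ ∧ IsCone (insert H σ) := by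
  simp [linkOf]

/-- The combinatorics of a pure unimodular simplicial fan which is balanced for the constant weight
`1` and connected in codimension one. Rays are indexed by `V`, cones are finite sets of rays, and
`lin` consists of the restrictions to the rays of the linear functions on the ambient space, so
that a function `V → ℝ` stands for a piecewise linear function. The minimal cone may be nonempty,
which includes stars of cones. -/
structure BalancedFan (V : Type*) [DecidableEq V] [Fintype V] where
  IsCone : Finset V → Prop
  lin : Submodule ℝ (V → ℝ)
  dim : ℕ
  isCone_of_subset_of_subset : ∀ ⦃ρ σ τ⦄, IsCone ρ → IsCone τ → ρ ⊆ σ → σ ⊆ τ → IsCone σ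
  exists_lin_eq : ∀ ⦃σ⦄, IsCone σ → ∀ y : V → ℝ, ∃ l ∈ lin, ∀ H ∈ σ, l H = y H
  sum_link_eq_zero : ∀ ⦃σ⦄, IsCone σ → #σ + 1 = dim → ∀ l ∈ lin, (∀ H ∈ σ, l H = 0) →
    ∑ H ∈ linkOf IsCone σ, l H = 0
  link_nonempty : ∀ ⦃σ⦄, IsCone σ → #σ < dim → (linkOf IsCone σ).Nonempty
  connected : ∀ ⦃σ⦄, IsCone σ → #σ + 2 < dim → ∀ z : V → ℝ,
    (∀ H ∈ linkOf IsCone σ, ∀ K ∈ linkOf IsCone (insert H σ), z H = z K) →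
    ∀ H ∈ linkOf IsCone σ, ∀ K ∈ linkOf IsCone σ, z H = z K

namespace BalancedFan

variable {V : Type*} [DecidableEq V] [Fintype V] (F : BalancedFan V)
  {σ : Finset V} {H K : V} {v l : V → ℝ} {vs ws : List (V → ℝ)}

/-- The link of a cone of the fan. -/
noncomputable abbrev link (σ : Finset V) : Finset V := linkOf F.IsCone σ

variable {F} in
theorem isCone_insert (hH : H ∈ F.link σ) : F.IsCone (insert H σ) := (mem_linkOf.1 hH).2

variable {F} in
theorem card_insert_of_mem_link (hH : H ∈ F.link σ) : #(insert H σ) = #σ + 1 :=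
  card_insert_of_notMem (mem_linkOf.1 hH).1

theorem mem_link_and_mem_link_insert (hσ : F.IsCone σ) (h : H ∈ F.link σ)
    (h' : K ∈ F.link (insert H σ)) : K ∈ F.link σ ∧ H ∈ F.link (insert K σ) := by
  simp only [link, mem_linkOf, mem_insert, not_or] at h h' ⊢
  have hKσ := F.isCone_of_subset_of_subset hσ h'.2 (subset_insert K σ)
    (insert_subset_insert _ (subset_insert H σ))
  exact ⟨⟨h'.1.2, hKσ⟩, ⟨Ne.symm h'.1.1, h.1⟩, insert_comm K H σ ▸ h'.2⟩

theorem sum_link_link_comm (hσ : F.IsCone σ) (f : V → V → ℝ) :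
    ∑ H ∈ F.link σ, ∑ K ∈ F.link (insert H σ), f H K =
      ∑ H ∈ F.link σ, ∑ K ∈ F.link (insert H σ), f K H :=
  sum_comm' fun _ _ => ⟨fun h => (F.mem_link_and_mem_link_insert hσ h.1 h.2).symm,
    fun h => F.mem_link_and_mem_link_insert hσ h.2 h.1⟩

/-! ### Linear interpolation -/

/-- A linear function with value `1` on the ray `H` of the cone `σ` and `0` on its other rays;
it is `0` if `σ` is not a cone. -/
noncomputable def dual (σ : Finset V) (H : V) : V → ℝ :=
  open scoped Classical in
  if hσ : F.IsCone σ then (F.exists_lin_eq hσ (Pi.single H 1)).choose else 0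

theorem dual_mem (σ : Finset V) (H : V) : F.dual σ H ∈ F.lin := by
  unfold dual
  split_ifs with hσ
  · exact (F.exists_lin_eq hσ _).choose_spec.1
  · exact F.lin.zero_mem

theorem dual_apply (hσ : F.IsCone σ) (H : V) (hK : K ∈ σ) :
    F.dual σ H K = (Pi.single H 1 : V → ℝ) K := by
  rw [dual, dif_pos hσ]
  exact (F.exists_lin_eq hσ _).choose_spec.2 K hK

/-- The linear function that agrees with a piecewise linear function on the cone `σ`. -/
noncomputable def linPart (σ : Finset V) : (V → ℝ) →ₗ[ℝ] (V → ℝ) :=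
  ∑ H ∈ σ, (LinearMap.proj H).smulRight (F.dual σ H)

theorem linPart_eq_sum (σ : Finset V) (v : V → ℝ) :
    F.linPart σ v = ∑ H ∈ σ, v H • F.dual σ H := by
  simp [linPart]

theorem linPart_mem (σ : Finset V) (v : V → ℝ) : F.linPart σ v ∈ F.lin := by
  rw [linPart_eq_sum]
  exact F.lin.sum_mem fun H _ => F.lin.smul_mem _ (F.dual_mem σ H)

theorem linPart_apply (hσ : F.IsCone σ) (v : V → ℝ) (hK : K ∈ σ) : F.linPart σ v K = v K := by
  simp_rw [linPart_eq_sum, Finset.sum_apply, Pi.smul_apply, F.dual_apply hσ _ hK]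
  simp [Pi.single_apply, hK]

theorem sub_linPart_apply (hσ : F.IsCone σ) (v : V → ℝ) : ∀ K ∈ σ, (v - F.linPart σ v) K = 0 :=
  fun _ hK => by rw [Pi.sub_apply, F.linPart_apply hσ v hK, sub_self]

theorem linPart_eq_zero (hv : ∀ K ∈ σ, v K = 0) : F.linPart σ v = 0 := by
  rw [linPart_eq_sum]
  exact sum_eq_zero fun K hK => by rw [hv K hK, zero_smul]

theorem linPart_insert (hv : ∀ K ∈ σ, v K = 0) (hH : H ∈ F.link σ) :
    F.linPart (insert H σ) v = v H • F.dual (insert H σ) H := by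
  rw [linPart_eq_sum, sum_insert (mem_linkOf.1 hH).1, add_eq_left]
  exact sum_eq_zero fun K hK => by rw [hv K hK, zero_smul]

/-! ### Mixed degrees -/

/-- The mixed degree of a list of piecewise linear functions on the star of the cone `σ`: the
product of the corresponding divisors, restricted to the orbit closure of `σ`. The first function
is made to vanish on `σ` by subtracting a linear one and then expanded along the rays in the link
of `σ`. The value is meaningful when the list has length `dim - #σ`. -/
noncomputable def deg : List (V → ℝ) → Finset V → ℝ
  | [], _ => 1
  | v :: vs, σ => ∑ H ∈ F.link σ, (v - F.linPart σ v) H * deg vs (insert H σ)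

theorem deg_cons_add (v w : V → ℝ) (vs : List (V → ℝ)) (σ : Finset V) :
    F.deg ((v + w) :: vs) σ = F.deg (v :: vs) σ + F.deg (w :: vs) σ := by
  simp only [deg, map_add, add_sub_add_comm, Pi.add_apply (v - F.linPart _ v), add_mul,
    sum_add_distrib]

theorem deg_cons_smul (a : ℝ) (v : V → ℝ) (vs : List (V → ℝ)) (σ : Finset V) :
    F.deg ((a • v) :: vs) σ = a * F.deg (v :: vs) σ := by
  simp only [deg, map_smul, ← smul_sub, mul_sum, Pi.smul_apply, smul_eq_mul, mul_assoc]

/-- The mixed degree as a linear map in the first function. -/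
noncomputable def degHom (vs : List (V → ℝ)) (σ : Finset V) : (V → ℝ) →ₗ[ℝ] ℝ where
  toFun v := F.deg (v :: vs) σ
  map_add' v w := F.deg_cons_add v w vs σ
  map_smul' a v := F.deg_cons_smul a v vs σ

@[simp]
theorem degHom_apply (v : V → ℝ) (vs : List (V → ℝ)) (σ : Finset V) :
    F.degHom vs σ v = F.deg (v :: vs) σ := rfl

/-- The mixed degree as a bilinear form in the first two functions. -/
noncomputable def degForm (vs : List (V → ℝ)) (σ : Finset V) : LinearMap.BilinForm ℝ (V → ℝ) :=
  LinearMap.mk₂ ℝ (fun v w => F.deg (v :: w :: vs) σ) (fun _ _ _ => F.deg_cons_add _ _ _ _)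
    (fun _ _ _ => F.deg_cons_smul _ _ _ _)
    (fun _ _ _ => by
      rw [deg, deg, deg, ← sum_add_distrib]
      exact sum_congr rfl fun _ _ => by rw [deg_cons_add, mul_add])
    (fun _ _ _ => by
      rw [deg, deg, smul_eq_mul, mul_sum]
      exact sum_congr rfl fun _ _ => by rw [deg_cons_smul, mul_left_comm])

@[simp]
theorem degForm_apply (v w : V → ℝ) (vs : List (V → ℝ)) (σ : Finset V) :
    F.degForm vs σ v w = F.deg (v :: w :: vs) σ := rfl

theorem deg_cons_of_forall_eq_zero (hv : ∀ K ∈ σ, v K = 0) (vs : List (V → ℝ)) :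
    F.deg (v :: vs) σ = ∑ H ∈ F.link σ, v H * F.deg vs (insert H σ) := by
  simp only [deg, F.linPart_eq_zero hv, sub_zero]

theorem deg_cons_sub_linPart (hσ : F.IsCone σ) (v : V → ℝ) (vs : List (V → ℝ)) :
    F.deg ((v - F.linPart σ v) :: vs) σ = F.deg (v :: vs) σ := by
  rw [F.deg_cons_of_forall_eq_zero (F.sub_linPart_apply hσ v), deg]

theorem sum_mul_deg_comm (hσ : F.IsCone σ) (hv : ∀ K ∈ σ, v K = 0) (hw : ∀ K ∈ σ, w K = 0)
    (vs : List (V → ℝ)) :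
    ∑ H ∈ F.link σ, v H * F.deg (w :: vs) (insert H σ) =
      ∑ H ∈ F.link σ, w H * F.deg (v :: vs) (insert H σ) := by
  have expand : ∀ {v w : V → ℝ}, (∀ K ∈ σ, w K = 0) →
      ∑ H ∈ F.link σ, v H * F.deg (w :: vs) (insert H σ) =
        ∑ H ∈ F.link σ, ∑ K ∈ F.link (insert H σ), v H * w K * F.deg vs (insert K (insert H σ)) -
        ∑ H ∈ F.link σ, ∑ K ∈ F.link (insert H σ),
          v H * w H * F.dual (insert H σ) H K * F.deg vs (insert K (insert H σ)) := by
    intro v w hw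
    simp only [← sum_sub_distrib]
    refine sum_congr rfl fun H hH => ?_
    rw [deg, F.linPart_insert hw hH, mul_sum]
    refine sum_congr rfl fun K _ => ?_
    simp only [Pi.sub_apply, Pi.smul_apply, smul_eq_mul]
    ring
  rw [expand hw, expand hv, F.sum_link_link_comm hσ]
  congr 1
  · exact sum_congr rfl fun H _ => sum_congr rfl fun K _ => by rw [insert_comm, mul_comm (v K)]
  · exact sum_congr rfl fun H _ => sum_congr rfl fun K _ => by rw [mul_comm (v H)]

theorem sum_mul_deg_eq_zero (hσ : F.IsCone σ) (hvs : #σ + vs.length + 1 = F.dim)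
    (hl : l ∈ F.lin) (hlσ : ∀ H ∈ σ, l H = 0) :
    ∑ H ∈ F.link σ, l H * F.deg vs (insert H σ) = 0 := by
  induction vs generalizing σ l with
  | nil =>
    simp only [deg, mul_one]
    exact F.sum_link_eq_zero hσ (by simpa using hvs) l hl hlσ
  | cons v vs ih =>
    have deg_eq_zero : ∀ H ∈ F.link σ, ∀ l ∈ F.lin, F.deg (l :: vs) (insert H σ) = 0 := by
      intro H hH l hl
      refine ih (isCone_insert hH) ?_ (F.lin.sub_mem hl (F.linPart_mem _ l))
        (F.sub_linPart_apply (isCone_insert hH) l)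
      rw [card_insert_of_mem_link hH, ← hvs, List.length_cons]
      ring
    have deg_sub : ∀ H ∈ F.link σ,
        F.deg (v :: vs) (insert H σ) = F.deg ((v - F.linPart σ v) :: vs) (insert H σ) := by
      intro H hH
      rw [← sub_add_cancel v (F.linPart σ v), deg_cons_add, deg_eq_zero H hH _ (F.linPart_mem σ v),
        add_zero, sub_add_cancel]
    rw [sum_congr rfl fun H hH => by rw [deg_sub H hH],
      F.sum_mul_deg_comm hσ hlσ (F.sub_linPart_apply hσ v)]
    exact sum_eq_zero fun H hH => by rw [deg_eq_zero H hH l hl, mul_zero]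

theorem deg_cons_eq_zero (hσ : F.IsCone σ) (hvs : #σ + vs.length + 1 = F.dim) (hl : l ∈ F.lin) :
    F.deg (l :: vs) σ = 0 :=
  F.sum_mul_deg_eq_zero hσ hvs (F.lin.sub_mem hl (F.linPart_mem σ l)) (F.sub_linPart_apply hσ l)

theorem deg_cons_sub (hσ : F.IsCone σ) (hvs : #σ + vs.length + 1 = F.dim) (v : V → ℝ)
    (hl : l ∈ F.lin) : F.deg ((v - l) :: vs) σ = F.deg (v :: vs) σ := by
  rw [← degHom_apply, map_sub, degHom_apply, degHom_apply, F.deg_cons_eq_zero hσ hvs hl, sub_zero]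

theorem deg_cons_of_eqOn (hσ : F.IsCone σ) (hvs : #σ + vs.length + 1 = F.dim) (hl : l ∈ F.lin)
    (hlv : ∀ K ∈ σ, l K = v K) :
    F.deg (v :: vs) σ = ∑ H ∈ F.link σ, (v H - l H) * F.deg vs (insert H σ) := by
  rw [← F.deg_cons_sub hσ hvs v hl, F.deg_cons_of_forall_eq_zero]
  · rfl
  · exact fun K hK => by rw [Pi.sub_apply, hlv K hK, sub_self]

theorem deg_cons_cons_sub (hvs : #σ + vs.length + 2 = F.dim) (v w : V → ℝ) (hl : l ∈ F.lin) :
    F.deg (v :: (w - l) :: vs) σ = F.deg (v :: w :: vs) σ := by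
  rw [deg, deg]
  refine sum_congr rfl fun H hH => ?_
  rw [F.deg_cons_sub (isCone_insert hH) (by rw [card_insert_of_mem_link hH]; lia) w hl]

theorem degForm_sub_linPart (hσ : F.IsCone σ) (hvs : #σ + vs.length + 2 = F.dim) (v w : V → ℝ) :
    F.degForm vs σ (v - F.linPart σ v) (w - F.linPart σ w) = F.degForm vs σ v w := by
  rw [degForm_apply, F.deg_cons_sub_linPart hσ, F.deg_cons_cons_sub hvs _ _ (F.linPart_mem σ w),
    degForm_apply]

theorem degForm_isSymm (hσ : F.IsCone σ) (hvs : #σ + vs.length + 2 = F.dim) :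
    (F.degForm vs σ).IsSymm := by
  refine ⟨fun v w => ?_⟩
  have hv := F.sub_linPart_apply hσ v
  have hw := F.sub_linPart_apply hσ w
  rw [← F.degForm_sub_linPart hσ hvs, ← F.degForm_sub_linPart hσ hvs w]
  simp only [degForm_apply]
  rw [F.deg_cons_of_forall_eq_zero hv, F.sum_mul_deg_comm hσ hv hw,
    ← F.deg_cons_of_forall_eq_zero hw]

theorem deg_swap (hσ : F.IsCone σ) (hvs : #σ + vs.length + 2 = F.dim) (v w : V → ℝ) :
    F.deg (v :: w :: vs) σ = F.deg (w :: v :: vs) σ :=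
  (F.degForm_isSymm hσ hvs).eq v w

theorem deg_perm (h : vs.Perm ws) (hσ : F.IsCone σ) (hvs : #σ + vs.length = F.dim) :
    F.deg vs σ = F.deg ws σ := by
  induction h generalizing σ with
  | nil => rfl
  | cons v _ ih =>
    rw [deg, deg]
    refine sum_congr rfl fun H hH => ?_
    rw [ih (isCone_insert hH)]
    rw [card_insert_of_mem_link hH, ← hvs, List.length_cons]
    ring
  | swap v w vs => exact F.deg_swap hσ (by simpa [add_assoc] using hvs) _ _
  | trans h _ ih ih' => rw [ih hσ hvs, ih' hσ (h.length_eq ▸ hvs)]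

end BalancedFan

end Fan

section FanLorentzian

open Finset Matrix

namespace BalancedFan

variable {V : Type*} [DecidableEq V] [Fintype V] (F : BalancedFan V)
  {σ : Finset V} {H K : V} {v w l : V → ℝ} {us vs : List (V → ℝ)}

/-- A piecewise linear function is ample if around every cone it is, up to a linear function,
zero on the cone and positive on its link. -/
def IsAmple (v : V → ℝ) : Prop :=
  ∀ ⦃σ⦄, F.IsCone σ → #σ < F.dim →
    ∃ l ∈ F.lin, (∀ H ∈ σ, l H = v H) ∧ ∀ H ∈ F.link σ, l H < v H

/-- A piecewise linear function is nef if around every cone it is, up to a linear function,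
zero on the cone and nonnegative on its link. -/
def IsNef (v : V → ℝ) : Prop :=
  ∀ ⦃σ⦄, F.IsCone σ → #σ < F.dim →
    ∃ l ∈ F.lin, (∀ H ∈ σ, l H = v H) ∧ ∀ H ∈ F.link σ, l H ≤ v H

variable {F} in
theorem IsNef.add_smul_isAmple (hv : F.IsNef v) (hw : F.IsAmple w) {ε : ℝ} (hε : 0 < ε) :
    F.IsAmple (v + ε • w) := by
  intro σ hσ hdim
  obtain ⟨l, hl, hlσ, hl_le⟩ := hv hσ hdim
  obtain ⟨m, hm, hmσ, hm_lt⟩ := hw hσ hdim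
  refine ⟨l + ε • m, F.lin.add_mem hl (F.lin.smul_mem _ hm), fun H hH => ?_, fun H hH => ?_⟩
  · simp [hlσ H hH, hmσ H hH]
  · exact add_lt_add_of_le_of_lt (hl_le H hH) (mul_lt_mul_of_pos_left (hm_lt H hH) hε)

theorem deg_pos (hvs : ∀ v ∈ vs, F.IsAmple v) (hσ : F.IsCone σ) (hdim : #σ + vs.length = F.dim) :
    0 < F.deg vs σ := by
  induction vs generalizing σ with
  | nil => exact one_pos
  | cons v vs ih =>
    rw [List.forall_mem_cons] at hvs
    rw [List.length_cons] at hdim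
    obtain ⟨l, hl, hlσ, hl_lt⟩ := hvs.1 hσ (by lia)
    rw [F.deg_cons_of_eqOn hσ (by lia) hl hlσ]
    refine sum_pos (fun H hH => mul_pos (sub_pos.2 (hl_lt H hH)) ?_)
      (F.link_nonempty hσ (by lia))
    exact ih hvs.2 (isCone_insert hH) (by rw [card_insert_of_mem_link hH]; lia)

/-! ### The Hessian of the mixed degree -/

/-- The matrix of `F.degForm us σ` on the piecewise linear functions vanishing on `σ`, with respect
to the rays in the link of `σ`. -/
noncomputable def hessian (us : List (V → ℝ)) (σ : Finset V) :
    Matrix (F.link σ) (F.link σ) ℝ :=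
  of fun i j => F.deg (Pi.single (j : V) 1 :: us) (insert (i : V) σ)

theorem hessian_mulVec (hσ : F.IsCone σ) (us : List (V → ℝ)) (hv : ∀ K ∈ σ, v K = 0)
    (i : F.link σ) :
    (F.hessian us σ *ᵥ fun j => v j) i = F.deg (v :: us) (insert (i : V) σ) := by
  have hv_link : ∀ K ∈ insert (i : V) σ ∪ F.link (insert (i : V) σ),
      (∑ j ∈ F.link σ, v j • (Pi.single j 1 : V → ℝ)) K = v K := by
    intro K hK
    have hmem : K ∈ F.link σ ∨ K ∈ σ := by
      simp only [mem_union, mem_insert] at hK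
      rcases hK with (rfl | hK) | hK
      · exact .inl i.2
      · exact .inr hK
      · exact .inl (F.mem_link_and_mem_link_insert hσ i.2 hK).1
    have : K ∉ F.link σ → v K = 0 := fun hK => hv K (hmem.resolve_left hK)
    simpa [Finset.sum_apply, Pi.single_apply, eq_comm] using this
  calc (F.hessian us σ *ᵥ fun j => v j) i
      = ∑ j ∈ F.link σ, v j * F.degHom us (insert (i : V) σ) (Pi.single j 1) := by
        rw [← sum_coe_sort]
        exact sum_congr rfl fun j _ => mul_comm _ _
    _ = F.deg ((∑ j ∈ F.link σ, v j • (Pi.single j 1 : V → ℝ)) :: us) (insert (i : V) σ) := by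
        rw [← degHom_apply, map_sum]
        simp only [map_smul, smul_eq_mul]
    _ = F.deg (v :: us) (insert (i : V) σ) := by
        rw [deg, deg, linPart_eq_sum, linPart_eq_sum]
        have hlin := sum_congr rfl fun K hK => congrArg (· • F.dual (insert (i : V) σ) K)
          (hv_link K (mem_union_left _ hK))
        refine sum_congr rfl fun H hH => ?_
        rw [hlin, Pi.sub_apply, hv_link H (mem_union_right _ hH), Pi.sub_apply]

theorem dotProduct_hessian_mulVec (hσ : F.IsCone σ) (us : List (V → ℝ))
    (hv : ∀ K ∈ σ, v K = 0) (hw : ∀ K ∈ σ, w K = 0) :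
    (fun i : F.link σ => v i) ⬝ᵥ (F.hessian us σ *ᵥ fun j => w j) = F.degForm us σ v w := by
  rw [degForm_apply, F.deg_cons_of_forall_eq_zero hv, ← sum_coe_sort]
  exact sum_congr rfl fun i _ => by rw [F.hessian_mulVec hσ us hw]

theorem hessian_isSymm (hσ : F.IsCone σ) (hus : #σ + us.length + 2 = F.dim) :
    (F.hessian us σ).IsSymm := by
  have single_eq_zero : ∀ i : F.link σ, ∀ K ∈ σ, (Pi.single (i : V) 1 : V → ℝ) K = 0 :=
    fun i K hK => Pi.single_eq_of_ne (ne_of_mem_of_not_mem hK (mem_linkOf.1 i.2).1) _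
  have hessian_eq : ∀ i j, F.hessian us σ i j =
      F.deg (Pi.single (i : V) 1 :: Pi.single (j : V) 1 :: us) σ := by
    intro i j
    rw [F.deg_cons_of_forall_eq_zero (single_eq_zero i), sum_eq_single_of_mem (i : V) i.2]
    · simp [hessian]
    · exact fun H _ hH => by rw [Pi.single_eq_of_ne hH, zero_mul]
  exact IsSymm.ext fun i j => by rw [hessian_eq, hessian_eq, F.deg_swap hσ hus]

theorem hessian_apply_of_ne (us : List (V → ℝ)) {i j : F.link σ} (hij : i ≠ j) :
    F.hessian us σ i j = if (j : V) ∈ F.link (insert (i : V) σ) then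
      F.deg us (insert (j : V) (insert (i : V) σ)) else 0 := by
  rw [hessian, of_apply, F.deg_cons_of_forall_eq_zero]
  · simp [Pi.single_apply]
  · refine fun K hK => Pi.single_eq_of_ne (ne_of_mem_of_not_mem hK ?_) _
    rw [mem_insert, not_or]
    exact ⟨fun h => hij (Subtype.ext h.symm), (mem_linkOf.1 j.2).1⟩

theorem hessian_pos_of_mem_link (hus : ∀ u ∈ us, F.IsAmple u) (hdim : #σ + us.length + 2 = F.dim)
    {i j : F.link σ} (hj : (j : V) ∈ F.link (insert (i : V) σ)) : 0 < F.hessian us σ i j := by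
  have hij : i ≠ j := by
    rintro rfl
    exact (mem_linkOf.1 hj).1 (mem_insert_self _ _)
  rw [hessian_apply_of_ne F us hij, if_pos hj]
  refine F.deg_pos hus (isCone_insert hj) ?_
  rw [card_insert_of_mem_link hj, card_insert_of_mem_link i.2, ← hdim]
  ring

theorem hessian_nonneg_of_ne (hus : ∀ u ∈ us, F.IsAmple u) (hdim : #σ + us.length + 2 = F.dim)
    {i j : F.link σ} (hij : i ≠ j) : 0 ≤ F.hessian us σ i j := by
  by_cases hj : (j : V) ∈ F.link (insert (i : V) σ)
  · exact (F.hessian_pos_of_mem_link hus hdim hj).le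
  · rw [hessian_apply_of_ne F us hij, if_neg hj]

theorem eq_of_hessian_pos (hσ : F.IsCone σ) (hus : ∀ u ∈ us, F.IsAmple u)
    (hdim : #σ + us.length + 2 = F.dim) (hne : us ≠ []) (z : F.link σ → ℝ)
    (hz : ∀ i j, i ≠ j → 0 < F.hessian us σ i j → z i = z j) (i j : F.link σ) : z i = z j := by
  have extend_apply : ∀ i : F.link σ, Function.extend Subtype.val z 0 (i : V) = z i :=
    Subtype.val_injective.extend_apply z 0
  rw [← extend_apply, ← extend_apply]
  have := List.length_pos_of_ne_nil hne
  refine F.connected hσ (by lia) _ (fun H hH K hK => ?_) _ i.2 _ j.2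
  obtain ⟨hKσ, -⟩ := F.mem_link_and_mem_link_insert hσ hH hK
  rw [extend_apply ⟨H, hH⟩, extend_apply ⟨K, hKσ⟩]
  refine hz _ _ ?_ (F.hessian_pos_of_mem_link hus hdim hK)
  rintro ⟨rfl⟩
  exact (mem_linkOf.1 hK).1 (mem_insert_self _ _)

theorem dotProduct_hessian_mulVec_le (hσ : F.IsCone σ) (hdim : #σ + vs.length + 3 = F.dim)
    (hl : l ∈ F.lin) (hlσ : ∀ H ∈ σ, l H = w H) (hl_le : ∀ H ∈ F.link σ, l H ≤ w H)
    (hpos : ∀ H ∈ F.link σ, 0 < F.deg (w :: w :: vs) (insert H σ))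
    (hlor : ∀ H ∈ F.link σ, IsLorentzian (F.degForm vs (insert H σ))) (y : F.link σ → ℝ) :
    y ⬝ᵥ (F.hessian (w :: vs) σ *ᵥ y) ≤ ∑ i : F.link σ, (w i - l i) *
      (F.hessian (w :: vs) σ *ᵥ y) i ^ 2 / F.deg (w :: w :: vs) (insert (i : V) σ) := by
  obtain ⟨v, hvσ, rfl⟩ : ∃ v : V → ℝ, (∀ K ∈ σ, v K = 0) ∧ (fun i : F.link σ => v i) = y := by
    refine ⟨Function.extend Subtype.val y 0, fun K hK => ?_,
      funext (Subtype.val_injective.extend_apply y 0)⟩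
    refine Function.extend_apply' _ _ _ ?_
    rintro ⟨i, rfl⟩
    exact (mem_linkOf.1 i.2).1 hK
  have hrotate : (v :: v :: w :: vs).Perm (w :: v :: v :: vs) :=
    (List.Perm.swap w v vs).cons v |>.trans (List.Perm.swap w v _)
  rw [F.dotProduct_hessian_mulVec hσ _ hvσ hvσ, degForm_apply, F.deg_perm hrotate hσ (by simp; lia),
    F.deg_cons_of_eqOn hσ (by simp; lia) hl hlσ, ← sum_coe_sort]
  refine sum_le_sum fun i _ => ?_
  rw [F.hessian_mulVec hσ _ hvσ, mul_div_assoc]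
  refine mul_le_mul_of_nonneg_left ?_ (sub_nonneg.2 (hl_le i i.2))
  rw [le_div_iff₀ (hpos i i.2)]
  exact hlor i i.2 v w (hpos i i.2)

theorem isLorentzian_degForm_cons (hσ : F.IsCone σ) (hdim : #σ + vs.length + 3 = F.dim)
    (hw : F.IsAmple w) (hvs : ∀ v ∈ vs, F.IsAmple v)
    (hlor : ∀ H ∈ F.link σ, IsLorentzian (F.degForm vs (insert H σ))) :
    IsLorentzian (F.degForm (w :: vs) σ) := by
  have hwvs : ∀ v ∈ w :: vs, F.IsAmple v := List.forall_mem_cons.2 ⟨hw, hvs⟩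
  have hdim' : #σ + (w :: vs).length + 2 = F.dim := by rw [List.length_cons]; lia
  obtain ⟨l, hl, hlσ, hl_lt⟩ := hw hσ (by lia)
  have hwlσ : ∀ K ∈ σ, (w - l) K = 0 := fun K hK => by rw [Pi.sub_apply, hlσ K hK, sub_self]
  have hpos : ∀ H ∈ F.link σ, 0 < F.deg (w :: w :: vs) (insert H σ) := fun H hH =>
    F.deg_pos (List.forall_mem_cons.2 ⟨hw, hwvs⟩) (isCone_insert hH)
      (by rw [card_insert_of_mem_link hH, ← hdim', List.length_cons]; ring)
  have hmulVec : ∀ i, (F.hessian (w :: vs) σ *ᵥ fun j => (w - l) j) i =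
      F.deg (w :: w :: vs) (insert (i : V) σ) := fun i => by
    rw [F.hessian_mulVec hσ _ hwlσ, F.deg_cons_sub (isCone_insert i.2) _ w hl]
    rw [card_insert_of_mem_link i.2, ← hdim']
    ring
  refine .of_nonpos_of_orthogonal (F.degForm_isSymm hσ hdim') (c := w - l) fun x hx => ?_
  have hxσ := F.sub_linPart_apply hσ x
  rw [← F.degForm_sub_linPart hσ hdim', ← F.dotProduct_hessian_mulVec hσ _ hxσ hxσ]
  refine dotProduct_mulVec_nonpos_of_orthogonal (c := fun i : F.link σ => (w - l) i)
    (F.hessian_isSymm hσ hdim') (fun i j => F.hessian_nonneg_of_ne hwvs hdim')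
    (fun i => sub_pos.2 (hl_lt i i.2)) (fun i => hmulVec i ▸ hpos i i.2) (fun y => ?_)
    (F.eq_of_hessian_pos hσ hwvs hdim' (List.cons_ne_nil w vs)) ?_
  · simp only [hmulVec]
    exact F.dotProduct_hessian_mulVec_le hσ hdim hl hlσ (fun H hH => (hl_lt H hH).le) hpos hlor y
  · rw [F.dotProduct_hessian_mulVec hσ _ hxσ hwlσ, degForm_apply, F.deg_cons_sub_linPart hσ, ← hx,
      degForm_apply]

theorem isLorentzian_degForm
    (hF : ∀ ⦃σ⦄, F.IsCone σ → #σ + 2 = F.dim → IsLorentzian (F.degForm [] σ))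
    (hvs : ∀ v ∈ vs, F.IsAmple v) (hσ : F.IsCone σ) (hdim : #σ + vs.length + 2 = F.dim) :
    IsLorentzian (F.degForm vs σ) := by
  induction vs generalizing σ with
  | nil => exact hF hσ (by simpa using hdim)
  | cons w vs ih =>
    rw [List.forall_mem_cons] at hvs
    rw [List.length_cons] at hdim
    refine F.isLorentzian_degForm_cons hσ (by lia) hvs.1 hvs.2 fun H hH => ?_
    exact ih hvs.2 (isCone_insert hH) (by rw [card_insert_of_mem_link hH]; lia)

/-! ### Nef functions as limits of ample ones -/

theorem continuous_deg_map_add_smul (w : V → ℝ) (vs : List (V → ℝ)) (σ : Finset V) :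
    Continuous fun ε : ℝ => F.deg (vs.map fun v => v + ε • w) σ := by
  induction vs generalizing σ with
  | nil => exact continuous_const
  | cons v vs ih =>
    simp only [List.map_cons, deg, map_add, map_smul, Pi.sub_apply, Pi.add_apply, Pi.smul_apply]
    have := fun H => ih (insert H σ)
    fun_prop

theorem mul_deg_le_sq_deg
    (hF : ∀ ⦃σ⦄, F.IsCone σ → #σ + 2 = F.dim → IsLorentzian (F.degForm [] σ))
    (hw : F.IsAmple w) (hvs : ∀ v ∈ vs, F.IsNef v) (hσ : F.IsCone σ)
    (hdim : #σ + vs.length + 2 = F.dim) (u : V → ℝ) (hv : F.IsNef v) :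
    F.deg (u :: u :: vs) σ * F.deg (v :: v :: vs) σ ≤ F.deg (u :: v :: vs) σ ^ 2 := by
  have htendsto : ∀ a b : V → ℝ, Filter.Tendsto
      (fun ε : ℝ => F.deg ((a :: b :: vs).map fun v => v + ε • w) σ)
      (nhdsWithin 0 (Set.Ioi 0)) (nhds (F.deg (a :: b :: vs) σ)) := by
    intro a b
    have h := (F.continuous_deg_map_add_smul w (a :: b :: vs) σ).tendsto 0
    simp only [zero_smul, add_zero, List.map_id'] at h
    exact h.mono_left nhdsWithin_le_nhds
  refine le_of_tendsto_of_tendsto ((htendsto u u).mul (htendsto v v)) ((htendsto u v).pow 2) ?_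
  filter_upwards [self_mem_nhdsWithin] with ε (hε : 0 < ε)
  have hvs' : ∀ v ∈ vs.map fun v => v + ε • w, F.IsAmple v :=
    List.forall_mem_map.2 fun v hv => (hvs v hv).add_smul_isAmple hw hε
  have hv' := hv.add_smul_isAmple hw hε
  refine F.isLorentzian_degForm hF hvs' hσ (by rwa [List.length_map]) _ _ ?_
  exact F.deg_pos (List.forall_mem_cons.2 ⟨hv', List.forall_mem_cons.2 ⟨hv', hvs'⟩⟩) hσ
    (by simp only [List.length_cons, List.length_map]; lia)

end BalancedFan

end FanLorentzian

section RankFunction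

open Finset

/-- The rank function of a loopless matroid on a finite ground set, axiomatised by its behaviour
under adding one element. -/
structure LooplessRankFunction (α : Type*) [DecidableEq α] where
  rk : Finset α → ℕ
  rk_empty : rk ∅ = 0
  rk_mono : Monotone rk
  rk_insert_le : ∀ e A, rk (insert e A) ≤ rk A + 1
  rk_insert_insert : ∀ e f A, rk (insert e A) = rk A → rk (insert f A) = rk A →
    rk (insert e (insert f A)) = rk A
  rk_singleton : ∀ e, rk {e} = 1

/-- The modular set functions `H ↦ k + ∑ i ∈ H, c i`, i.e. the constants together with the linear
functions evaluated at indicator vectors. -/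
def modularFunctions (α : Type*) : Submodule ℝ (Finset α → ℝ) where
  carrier := {l | ∃ (k : ℝ) (c : α → ℝ), ∀ H, l H = k + ∑ i ∈ H, c i}
  add_mem' := by
    rintro a b ⟨k, c, h⟩ ⟨k', c', h'⟩
    exact ⟨k + k', c + c', fun H => by simp [h, h', sum_add_distrib, add_add_add_comm]⟩
  zero_mem' := ⟨0, 0, by simp⟩
  smul_mem' := by
    rintro t a ⟨k, c, h⟩
    exact ⟨t * k, t • c, fun H => by simp [h, mul_add, mul_sum]⟩

namespace LooplessRankFunction

variable {α : Type*} [DecidableEq α] (M : LooplessRankFunction α) {A B F G H : Finset α}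
  {e i : α} {k : ℕ}

/-! ### Closure and flats -/

theorem rk_insert_eq_of_subset (h : A ⊆ B) (he : M.rk (insert e A) = M.rk A) :
    M.rk (insert e B) = M.rk B := by
  suffices ∀ C, M.rk (insert e (A ∪ C)) = M.rk (A ∪ C) from union_eq_right.2 h ▸ this B
  intro C
  induction C using Finset.induction_on with
  | empty => simpa using he
  | insert f C _ ih =>
    rw [union_insert]
    by_cases hf : M.rk (insert f (A ∪ C)) = M.rk (A ∪ C)
    · rw [M.rk_insert_insert _ _ _ ih hf, hf]
    · have := M.rk_insert_le f (A ∪ C)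
      have := M.rk_mono (subset_insert f (A ∪ C))
      have := insert_comm e f (A ∪ C) ▸ M.rk_insert_le f (insert e (A ∪ C))
      have := M.rk_mono (subset_insert e (insert f (A ∪ C)))
      omega

variable {M} in
theorem eq_empty_of_rk_eq_zero (h : M.rk A = 0) : A = ∅ := by
  refine eq_empty_of_forall_notMem fun e he => ?_
  have := M.rk_mono (singleton_subset_iff.2 he)
  rw [M.rk_singleton] at this
  omega

theorem rk_union_eq (h : ∀ e ∈ B, M.rk (insert e A) = M.rk A) : M.rk (A ∪ B) = M.rk A := by
  induction B using Finset.induction_on with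
  | empty => rw [union_empty]
  | insert f B _ ih =>
    rw [union_insert, M.rk_insert_eq_of_subset subset_union_left (h f (mem_insert_self f B)),
      ih fun e he => h e (mem_insert_of_mem he)]

variable [Fintype α]

/-- The closure operator of the matroid. -/
def closure : ClosureOperator (Finset α) :=
  ClosureOperator.mk₂ (fun A => univ.filter fun e => M.rk (insert e A) = M.rk A)
    (fun A e he => by simp [insert_eq_of_mem he])
    (fun A B hAB e he => by
      simp only [mem_filter, mem_univ, true_and] at he ⊢
      have hB : M.rk (B ∪ A) = M.rk B := M.rk_union_eq fun f hf => by simpa using hAB hf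
      have he' : M.rk (insert e (B ∪ A)) = M.rk (B ∪ A) :=
        M.rk_insert_eq_of_subset subset_union_right he
      have := M.rk_mono (insert_subset_insert e (subset_union_left (s₁ := B) (s₂ := A)))
      exact le_antisymm (by omega) (M.rk_mono (subset_insert e B)))

variable {M} in
theorem mem_closure : e ∈ M.closure A ↔ M.rk (insert e A) = M.rk A := by
  simp [closure]

theorem subset_closure (A : Finset α) : A ⊆ M.closure A := M.closure.le_closure A

theorem mem_closure_insert (e : α) (A : Finset α) : e ∈ M.closure (insert e A) :=
  M.subset_closure _ (mem_insert_self e A)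

theorem subset_closure_insert (e : α) (A : Finset α) : A ⊆ M.closure (insert e A) :=
  (subset_insert e A).trans (M.subset_closure _)

theorem rk_closure (A : Finset α) : M.rk (M.closure A) = M.rk A := by
  have := M.rk_union_eq fun e (he : e ∈ M.closure A) => mem_closure.1 he
  rwa [union_eq_right.2 (M.subset_closure A)] at this

/-- The flats of the matroid. -/
abbrev IsFlat (A : Finset α) : Prop := M.closure.IsClosed A

instance : DecidablePred M.IsFlat := fun A =>
  decidable_of_iff (M.closure A = A) M.closure.isClosed_iff.symm

theorem isFlat_closure (A : Finset α) : M.IsFlat (M.closure A) := M.closure.isClosed_closure A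

theorem isFlat_univ : M.IsFlat univ :=
  M.closure.isClosed_iff.2 ((subset_univ _).antisymm (M.subset_closure _))

theorem isFlat_empty : M.IsFlat ∅ :=
  M.closure.isClosed_iff.2 <| eq_empty_iff_forall_notMem.2 fun e he => by
    simpa [M.rk_empty, M.rk_singleton] using mem_closure.1 he

variable {M}

theorem IsFlat.closure_subset (hG : M.IsFlat G) (h : A ⊆ G) : M.closure A ⊆ G :=
  hG.closure_le_iff.2 h

theorem IsFlat.rk_insert (hA : M.IsFlat A) (he : e ∉ A) : M.rk (insert e A) = M.rk A + 1 := by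
  have : M.rk (insert e A) ≠ M.rk A := fun h => he (hA.closure_eq ▸ mem_closure.2 h)
  have := M.rk_insert_le e A
  have := M.rk_mono (subset_insert e A)
  omega

theorem IsFlat.rk_closure_insert (hA : M.IsFlat A) (he : e ∉ A) :
    M.rk (M.closure (insert e A)) = M.rk A + 1 := by
  rw [rk_closure, hA.rk_insert he]

theorem IsFlat.rk_lt_rk (hA : M.IsFlat A) (h : A ⊂ B) : M.rk A < M.rk B := by
  obtain ⟨e, heB, heA⟩ := exists_of_ssubset h
  have := hA.rk_insert heA
  have := M.rk_mono (insert_subset heB h.1)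
  omega

theorem IsFlat.eq_of_subset_of_rk_le (hA : M.IsFlat A) (h : A ⊆ B) (hr : M.rk B ≤ M.rk A) :
    A = B := by
  by_contra hne
  exact (hA.rk_lt_rk (h.ssubset_of_ne hne)).not_ge hr

theorem IsFlat.closure_insert_eq (hA : M.IsFlat A) (he : e ∉ A) (hH : M.IsFlat H) (hAH : A ⊆ H)
    (heH : e ∈ H) (hr : M.rk H = M.rk A + 1) : M.closure (insert e A) = H :=
  (M.isFlat_closure _).eq_of_subset_of_rk_le (hH.closure_subset (insert_subset heH hAH))
    (hA.rk_closure_insert he ▸ hr.le)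

theorem IsFlat.exists_notMem_of_rk_eq (hF : M.IsFlat F) (hG : M.IsFlat G) (hFG : F ⊆ G)
    (hiG : i ∈ G) (hiF : i ∉ F) (hFk : M.rk F ≤ k) (hkG : k < M.rk G) :
    ∃ H, M.IsFlat H ∧ F ⊆ H ∧ H ⊆ G ∧ i ∉ H ∧ M.rk H = k := by
  induction k, hFk using Nat.le_induction with
  | base => exact ⟨F, hF, Subset.rfl, hFG, hiF, rfl⟩
  | succ k hk ih =>
    obtain ⟨H, hH, hFH, hHG, hiH, rfl⟩ := ih (by omega)
    have hrk := hH.rk_closure_insert hiH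
    have hne : M.closure (insert i H) ≠ G := fun h => by
      rw [h] at hrk
      omega
    obtain ⟨j, hjG, hj⟩ := exists_of_ssubset
      ((hG.closure_subset (insert_subset hiG hHG)).ssubset_of_ne hne)
    have hjH : j ∉ H := fun h => hj (M.subset_closure_insert i H h)
    refine ⟨M.closure (insert j H), M.isFlat_closure _, hFH.trans (M.subset_closure_insert j H),
      hG.closure_subset (insert_subset hjG hHG), fun h => hj ?_, hH.rk_closure_insert hjH⟩
    rw [hH.closure_insert_eq hiH (M.isFlat_closure _) (M.subset_closure_insert j H) h
      (hH.rk_closure_insert hjH)]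
    exact M.mem_closure_insert j H

theorem IsFlat.exists_of_rk_eq (hF : M.IsFlat F) (hG : M.IsFlat G) (hFG : F ⊆ G)
    (hFk : M.rk F ≤ k) (hkG : k < M.rk G) :
    ∃ H, M.IsFlat H ∧ F ⊆ H ∧ H ⊆ G ∧ M.rk H = k := by
  have hss : F ⊂ G := hFG.ssubset_of_ne (by rintro rfl; omega)
  obtain ⟨i, hiG, hiF⟩ := exists_of_ssubset hss
  obtain ⟨H, hH, hFH, hHG, -, hHk⟩ := hF.exists_notMem_of_rk_eq hG hFG hiG hiF hFk hkG
  exact ⟨H, hH, hFH, hHG, hHk⟩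

variable (M)

/-- The flats covering the flat `F` that are contained in `G`: the atoms of the interval
`[F, G]`. -/
def covers (F G : Finset α) : Finset (Finset α) :=
  univ.filter fun H => M.IsFlat H ∧ F ⊆ H ∧ H ⊆ G ∧ M.rk H = M.rk F + 1

variable {M}

theorem mem_covers : H ∈ M.covers F G ↔ M.IsFlat H ∧ F ⊆ H ∧ H ⊆ G ∧ M.rk H = M.rk F + 1 := by
  simp [covers]

/-- The atoms of the interval `[F, G]` partition `G \ F`. -/
theorem IsFlat.sum_covers_sum_sdiff {R : Type*} [AddCommMonoid R] (hF : M.IsFlat F)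
    (hG : M.IsFlat G) (hFG : F ⊆ G) (c : α → R) :
    ∑ H ∈ M.covers F G, ∑ i ∈ H \ F, c i = ∑ i ∈ G \ F, c i := by
  have maps : ∀ i ∈ G \ F, M.closure (insert i F) ∈ M.covers F G := fun i hi => by
    rw [mem_sdiff] at hi
    exact mem_covers.2 ⟨M.isFlat_closure _, M.subset_closure_insert i F,
      hG.closure_subset (insert_subset hi.1 hFG), hF.rk_closure_insert hi.2⟩
  rw [← sum_fiberwise_of_maps_to maps]
  refine sum_congr rfl fun H hH => sum_congr ?_ fun _ _ => rfl
  obtain ⟨hHflat, hFH, hHG, hr⟩ := mem_covers.1 hH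
  ext i
  simp only [mem_sdiff, mem_filter]
  exact ⟨fun ⟨hiH, hiF⟩ => ⟨⟨hHG hiH, hiF⟩, hF.closure_insert_eq hiF hHflat hFH hiH hr⟩,
    fun ⟨⟨_, hiF⟩, h⟩ => ⟨h ▸ M.mem_closure_insert i F, hiF⟩⟩

theorem IsFlat.sum_covers_sub (hF : M.IsFlat F) (hG : M.IsFlat G) (hFG : F ⊆ G)
    {l : Finset α → ℝ} (hl : l ∈ modularFunctions α) :
    ∑ H ∈ M.covers F G, (l H - l F) = l G - l F := by
  obtain ⟨k, c, hkc⟩ := hl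
  have sub_eq : ∀ H, F ⊆ H → l H - l F = ∑ i ∈ H \ F, c i := fun H hFH => by
    rw [hkc, hkc, ← sum_sdiff hFH]
    ring
  rw [sub_eq G hFG, ← hF.sum_covers_sum_sdiff hG hFG]
  exact sum_congr rfl fun H hH => sub_eq H (mem_covers.1 hH).2.1

theorem IsFlat.exists_modularFunctions_sub_eq (hF : M.IsFlat F) (y : Finset α → ℝ) :
    ∃ l ∈ modularFunctions α, ∀ H ∈ M.covers F univ, l H - l F = y H := by
  let c : α → ℝ := fun i => y (M.closure (insert i F)) / #(M.closure (insert i F) \ F)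
  refine ⟨fun H => 0 + ∑ i ∈ H, c i, ⟨0, c, fun H => rfl⟩, fun H hH => ?_⟩
  obtain ⟨hHflat, hFH, -, hr⟩ := mem_covers.1 hH
  have hc : ∀ i ∈ H \ F, c i = y H / #(H \ F) := fun i hi => by
    rw [mem_sdiff] at hi
    simp only [c, hF.closure_insert_eq hi.2 hHflat hFH hi.1 hr]
  have hne : (H \ F).Nonempty := sdiff_nonempty.2 fun h => by
    have := M.rk_mono h
    omega
  have hcard : (#(H \ F) : ℝ) ≠ 0 := by exact_mod_cast hne.card_pos.ne'
  calc (0 + ∑ i ∈ H, c i) - (0 + ∑ i ∈ F, c i) = ∑ i ∈ H \ F, c i := by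
        rw [← sum_sdiff hFH]
        ring
    _ = y H := by
        rw [sum_congr rfl hc, sum_const, nsmul_eq_mul, mul_div_cancel₀ _ hcard]

/-! ### Möbius numbers and Weisner's recursion -/

variable (M)

/-- The absolute value `|μ(∅, G)|` of the Möbius function of the lattice of flats, computed by
the cross-cut formula `μ(∅, G) = ∑ (-1) ^ #X` over the spanning subsets `X` of `G`. -/
def absMobius (G : Finset α) : ℤ :=
  (-1) ^ M.rk G * ∑ X with M.closure X = G, (-1) ^ #X

/-- The flats covered by `G` that do not contain `i`. -/
def coversBelow (i : α) (G : Finset α) : Finset (Finset α) :=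
  univ.filter fun H => M.IsFlat H ∧ H ⊆ G ∧ i ∉ H ∧ M.rk H + 1 = M.rk G

variable {M}

theorem mem_coversBelow :
    H ∈ M.coversBelow i G ↔ M.IsFlat H ∧ H ⊆ G ∧ i ∉ H ∧ M.rk H + 1 = M.rk G := by
  simp [coversBelow]

theorem absMobius_empty : M.absMobius ∅ = 1 := by
  have : (univ.filter fun X => M.closure X = ∅) = {∅} := by
    ext X
    simp only [mem_filter, mem_univ, true_and, mem_singleton]
    exact ⟨fun h => subset_empty.1 (h ▸ M.subset_closure X), fun h => h ▸ M.isFlat_empty.closure_eq⟩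
  simp [absMobius, this, M.rk_empty]

theorem IsFlat.closure_insert_eq_iff (hG : M.IsFlat G) (hi : i ∈ G) (X : Finset α) :
    M.closure (insert i X) = G ↔ M.closure X = G ∨ M.closure X ∈ M.coversBelow i G := by
  have insert_subset_of : M.closure X ⊆ G → M.closure (insert i X) ⊆ G := fun h =>
    hG.closure_subset (insert_subset hi ((M.subset_closure X).trans h))
  have mono : M.closure X ⊆ M.closure (insert i X) :=
    (M.isFlat_closure _).closure_subset (M.subset_closure_insert i X)
  constructor
  · rintro rfl
    refine or_iff_not_imp_left.2 fun hne => mem_coversBelow.2 ⟨M.isFlat_closure X, mono, ?_, ?_⟩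
    · exact fun hiX => hne <| mono.antisymm <|
        (M.isFlat_closure X).closure_subset (insert_subset hiX (M.subset_closure X))
    · have := (M.isFlat_closure X).rk_lt_rk (mono.ssubset_of_ne hne)
      have := M.rk_insert_le i X
      rw [rk_closure, rk_closure] at *
      omega
  · rintro (h | h)
    · exact (insert_subset_of h.subset).antisymm (h ▸ mono)
    · obtain ⟨-, hXG, hiX, hr⟩ := mem_coversBelow.1 h
      refine (M.isFlat_closure _).eq_of_subset_of_rk_le (insert_subset_of hXG) ?_
      have := (M.isFlat_closure X).rk_lt_rk
        (mono.ssubset_of_ne fun h => hiX (h ▸ M.mem_closure_insert i X))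
      omega

theorem sum_neg_one_pow_card_closure_insert (i : α) (G : Finset α) :
    ∑ X with M.closure (insert i X) = G, (-1 : ℤ) ^ #X = 0 := by
  have insert_symmDiff : ∀ X : Finset α, insert i (symmDiff X {i}) = insert i X := fun X => by
    grind [mem_symmDiff]
  refine sum_involution (fun X _ => symmDiff X {i}) (fun X _ => ?_)
    (fun X _ _ h => ?_) (fun X hX => ?_) fun X _ => symmDiff_symmDiff_cancel_right _ _
  · by_cases hiX : i ∈ X
    · have : symmDiff X {i} = X.erase i := by grind [mem_symmDiff]
      rw [this, ← card_erase_add_one hiX]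
      ring
    · have : symmDiff X {i} = insert i X := by grind [mem_symmDiff]
      rw [this, card_insert_of_notMem hiX]
      ring
  · simpa using symmDiff_eq_left.1 h
  · simpa [insert_symmDiff] using hX

/-- Weisner's theorem. -/
theorem IsFlat.absMobius_eq_sum (hG : M.IsFlat G) (hi : i ∈ G) :
    M.absMobius G = ∑ H ∈ M.coversBelow i G, M.absMobius H := by
  have split : ∑ X with M.closure X = G, (-1 : ℤ) ^ #X +
      ∑ H ∈ M.coversBelow i G, ∑ X with M.closure X = H, (-1 : ℤ) ^ #X = 0 := by
    rw [sum_fiberwise_eq_sum_filter, ← sum_union, ← filter_or]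
    · rw [← M.sum_neg_one_pow_card_closure_insert i G]
      exact sum_congr (filter_congr fun X _ => (hG.closure_insert_eq_iff hi X).symm) fun _ _ => rfl
    · exact disjoint_filter.2 fun X _ h hX => (mem_coversBelow.1 (h ▸ hX)).2.2.1 hi
  rw [absMobius, eq_neg_of_add_eq_zero_left split, ← sum_neg_distrib, mul_sum]
  refine sum_congr rfl fun H hH => ?_
  rw [absMobius, ← (mem_coversBelow.1 hH).2.2.2]
  ring

theorem IsFlat.absMobius_pos (hG : M.IsFlat G) : 0 < M.absMobius G := by
  obtain ⟨n, hn⟩ : ∃ n, M.rk G = n := ⟨_, rfl⟩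
  induction n generalizing G with
  | zero => simp [eq_empty_of_rk_eq_zero hn, absMobius_empty]
  | succ n ih =>
    obtain ⟨i, hi⟩ : G.Nonempty := nonempty_iff_ne_empty.2 fun h => by simp [h, M.rk_empty] at hn
    rw [hG.absMobius_eq_sum hi]
    refine sum_pos (fun H hH => ?_) ?_
    · obtain ⟨hH, -, -, hr⟩ := mem_coversBelow.1 hH
      exact ih hH (by omega)
    · obtain ⟨H, hH, -, hHG, hiH, hr⟩ := M.isFlat_empty.exists_notMem_of_rk_eq hG
        (empty_subset G) hi (notMem_empty i) (k := n) (by simp [M.rk_empty]) (by omega)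
      exact ⟨H, mem_coversBelow.2 ⟨hH, hHG, hiH, by omega⟩⟩

end LooplessRankFunction

end RankFunction

section BergmanFan

open Finset

theorem exists_modularFunctions_eq_of_isChain {α : Type*} {σ : Finset (Finset α)}
    (hσ : IsChain (· ⊆ ·) (σ : Set (Finset α))) (y : Finset α → ℝ) :
    ∃ l ∈ modularFunctions α, ∀ H ∈ σ, l H = y H := by
  classical
  induction σ using Finset.strongInduction with
  | H σ ih =>
    have exists_top : ∀ τ ⊆ σ, τ.Nonempty → ∃ T ∈ τ, ∀ H ∈ τ, H ⊆ T := fun τ hτσ hτ => by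
      obtain ⟨T, hT⟩ := τ.exists_maximal hτ
      exact ⟨T, hT.1, fun H hH => (hσ.total (hτσ hH) (hτσ hT.1)).elim id (hT.2 hH)⟩
    rcases σ.eq_empty_or_nonempty with rfl | hne
    · exact ⟨0, zero_mem _, by simp⟩
    obtain ⟨G, hG, hGmax⟩ := exists_top σ Subset.rfl hne
    rcases (σ.erase G).eq_empty_or_nonempty with h | hne'
    · refine ⟨fun _ => y G, ⟨y G, 0, by simp⟩, fun H hH => ?_⟩
      rw [not_imp_comm.1 (fun hHG => mem_erase.2 ⟨hHG, hH⟩) (h ▸ notMem_empty H)]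
    obtain ⟨T, hT, hTmax⟩ := exists_top _ (erase_subset G σ) hne'
    obtain ⟨hTG, hTσ⟩ := mem_erase.1 hT
    obtain ⟨i, hiG, hiT⟩ := exists_of_ssubset ((hGmax T hTσ).ssubset_of_ne hTG)
    obtain ⟨l, hl, hly⟩ := ih _ (erase_ssubset hG) (hσ.mono (erase_subset G σ))
    refine ⟨l + (y G - l G) • fun H => if i ∈ H then 1 else 0, add_mem hl <|
      Submodule.smul_mem _ _ ⟨0, Pi.single i 1, fun H => by simp⟩, fun H hH => ?_⟩
    by_cases hHG : H = G
    · simp [hHG, hiG]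
    · have hHσ := mem_erase.2 ⟨hHG, hH⟩
      have hiH : i ∉ H := fun hiH => hiT (hTmax H hHσ hiH)
      simp [hly H hHσ, hiH]

namespace LooplessRankFunction

variable {α : Type*} [DecidableEq α] [Fintype α] (M : LooplessRankFunction α)
  {σ : Finset (Finset α)} {F G H K P : Finset α} {a : ℕ}

/-- A flag of flats that contains the two extreme flats. -/
structure IsFlag (σ : Finset (Finset α)) : Prop where
  isFlat : ∀ ⦃H⦄, H ∈ σ → M.IsFlat H
  isChain : IsChain (· ⊆ ·) (σ : Set (Finset α))
  empty_mem : ∅ ∈ σ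
  univ_mem : univ ∈ σ

/-- The ranks not attained by the members of the flag `σ`. -/
def missingRanks (σ : Finset (Finset α)) : Finset ℕ :=
  range (M.rk univ + 1) \ σ.image M.rk

/-- `F` and `G` are consecutive members of the flag `σ`. -/
structure IsConsecutive (σ : Finset (Finset α)) (F G : Finset α) : Prop where
  left_mem : F ∈ σ
  right_mem : G ∈ σ
  ssubset : F ⊂ G
  subset_or_subset : ∀ ⦃K⦄, K ∈ σ → K ⊆ F ∨ G ⊆ K

variable {M}

theorem IsFlag.subset_of_rk_le (hσ : M.IsFlag σ) (hH : H ∈ σ) (hK : K ∈ σ)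
    (h : M.rk H ≤ M.rk K) : H ⊆ K :=
  (hσ.isChain.total hH hK).elim id fun h' =>
    ((hσ.isFlat hK).eq_of_subset_of_rk_le h' h).symm.subset

theorem IsFlag.rk_injOn (hσ : M.IsFlag σ) : Set.InjOn M.rk σ := fun _ hH _ hK h =>
  (hσ.subset_of_rk_le hH hK h.le).antisymm (hσ.subset_of_rk_le hK hH h.ge)

theorem IsFlag.insert_iff (hσ : M.IsFlag σ) :
    M.IsFlag (insert H σ) ↔ M.IsFlat H ∧ ∀ K ∈ σ, H ⊆ K ∨ K ⊆ H := by
  refine ⟨fun h => ⟨h.isFlat (mem_insert_self H σ), fun K hK =>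
    h.isChain.total (mem_insert_self H σ) (mem_insert_of_mem hK)⟩, fun ⟨hH, hcomp⟩ =>
    ⟨forall_mem_insert .. |>.2 ⟨hH, hσ.isFlat⟩, ?_, mem_insert_of_mem hσ.empty_mem,
      mem_insert_of_mem hσ.univ_mem⟩⟩
  rw [coe_insert]
  exact hσ.isChain.insert fun K hK _ => hcomp K hK

theorem IsFlag.mem_link (hσ : M.IsFlag σ) :
    H ∈ linkOf M.IsFlag σ ↔ H ∉ σ ∧ M.IsFlat H ∧ ∀ K ∈ σ, H ⊆ K ∨ K ⊆ H := by
  rw [mem_linkOf, hσ.insert_iff]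

theorem subset_of_mem_link_of_rk_le (hH : H ∈ linkOf M.IsFlag σ) (hK : K ∈ σ)
    (h : M.rk H ≤ M.rk K) : H ⊆ K :=
  (mem_linkOf.1 hH).2.subset_of_rk_le (mem_insert_self H σ) (mem_insert_of_mem hK) h

theorem subset_of_mem_link_of_rk_ge (hH : H ∈ linkOf M.IsFlag σ) (hK : K ∈ σ)
    (h : M.rk K ≤ M.rk H) : K ⊆ H :=
  (mem_linkOf.1 hH).2.subset_of_rk_le (mem_insert_of_mem hK) (mem_insert_self H σ) h

theorem IsFlag.mem_link_insert (hσ : M.IsFlag σ) (hH : H ∈ linkOf M.IsFlag σ)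
    (hK : K ∈ linkOf M.IsFlag σ) (hne : H ≠ K) (h : H ⊆ K ∨ K ⊆ H) :
    K ∈ linkOf M.IsFlag (insert H σ) := by
  obtain ⟨hKσ, hKflat, hKcomp⟩ := hσ.mem_link.1 hK
  exact (mem_linkOf.1 hH).2.mem_link.2 ⟨fun h => (mem_insert.1 h).elim hne.symm hKσ, hKflat,
    (forall_mem_insert ..).2 ⟨h.symm, hKcomp⟩⟩

/-! ### Missing ranks -/

theorem mem_missingRanks : a ∈ M.missingRanks σ ↔ a ≤ M.rk univ ∧ ∀ H ∈ σ, M.rk H ≠ a := by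
  simp [missingRanks]

theorem IsFlag.card_missingRanks_add (hσ : M.IsFlag σ) :
    #(M.missingRanks σ) + #σ = M.rk univ + 1 := by
  have hsub : σ.image M.rk ⊆ range (M.rk univ + 1) :=
    image_subset_iff.2 fun H _ => mem_range_succ_iff.2 (M.rk_mono (subset_univ H))
  rw [missingRanks, ← card_image_of_injOn hσ.rk_injOn, card_sdiff_add_card_eq_card hsub,
    card_range]

theorem rk_mem_missingRanks (hH : H ∈ linkOf M.IsFlag σ) : M.rk H ∈ M.missingRanks σ := by
  obtain ⟨hHσ, hins⟩ := mem_linkOf.1 hH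
  refine mem_missingRanks.2 ⟨M.rk_mono (subset_univ H), fun K hK h => hHσ ?_⟩
  rwa [← hins.rk_injOn (mem_insert_of_mem hK) (mem_insert_self H σ) h]

theorem IsFlag.exists_isConsecutive (hσ : M.IsFlag σ) (ha : a ∈ M.missingRanks σ) :
    ∃ F G, IsConsecutive σ F G ∧ M.rk F < a ∧ a < M.rk G := by
  obtain ⟨ha, hne⟩ := mem_missingRanks.1 ha
  have hzero := hne ∅ hσ.empty_mem
  rw [M.rk_empty] at hzero
  obtain ⟨F, hF, hFmax⟩ := exists_max_image (σ.filter (M.rk · < a)) M.rk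
    ⟨∅, mem_filter.2 ⟨hσ.empty_mem, M.rk_empty ▸ by omega⟩⟩
  obtain ⟨G, hG, hGmin⟩ := exists_min_image (σ.filter (a < M.rk ·)) M.rk
    ⟨univ, mem_filter.2 ⟨hσ.univ_mem, ha.lt_of_ne' (hne univ hσ.univ_mem)⟩⟩
  rw [mem_filter] at hF hG
  refine ⟨F, G, ⟨hF.1, hG.1, ?_, fun K hK => ?_⟩, hF.2, hG.2⟩
  · exact (hσ.subset_of_rk_le hF.1 hG.1 (hF.2.trans hG.2).le).ssubset_of_ne
      (by rintro rfl; omega)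
  · exact (lt_or_gt_of_ne (hne K hK)).imp
      (fun h => hσ.subset_of_rk_le hK hF.1 (hFmax K (mem_filter.2 ⟨hK, h⟩)))
      (fun h => hσ.subset_of_rk_le hG.1 hK (hGmin K (mem_filter.2 ⟨hK, h⟩)))

theorem IsConsecutive.mem_missingRanks (h : IsConsecutive σ F G) (hF : M.rk F < a)
    (hG : a < M.rk G) : a ∈ M.missingRanks σ := by
  refine LooplessRankFunction.mem_missingRanks.2
    ⟨hG.le.trans (M.rk_mono (subset_univ G)), fun K hK => ?_⟩
  rintro rfl
  exact (h.subset_or_subset hK).elim (fun h => (M.rk_mono h).not_gt hF)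
    (fun h => (M.rk_mono h).not_gt hG)

theorem IsConsecutive.mem_link (h : IsConsecutive σ F G) (hσ : M.IsFlag σ) (hH : M.IsFlat H)
    (hFH : F ⊂ H) (hHG : H ⊂ G) : H ∈ linkOf M.IsFlag σ :=
  hσ.mem_link.2 ⟨fun hHσ => (h.subset_or_subset hHσ).elim hFH.2 hHG.2, hH, fun _ hK =>
    (h.subset_or_subset hK).symm.imp hHG.1.trans hFH.1.trans'⟩

theorem IsFlag.exists_mem_link_rk_eq (hσ : M.IsFlag σ) (ha : a ∈ M.missingRanks σ) :
    ∃ H ∈ linkOf M.IsFlag σ, M.rk H = a := by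
  obtain ⟨F, G, hFG, hF, hG⟩ := hσ.exists_isConsecutive ha
  obtain ⟨H, hH, hFH, hHG, rfl⟩ := (hσ.isFlat hFG.left_mem).exists_of_rk_eq
    (hσ.isFlat hFG.right_mem) hFG.ssubset.1 hF.le hG
  exact ⟨H, hFG.mem_link hσ hH (hFH.ssubset_of_ne (by rintro rfl; omega))
    (hHG.ssubset_of_ne (by rintro rfl; omega)), rfl⟩

/-! ### Balancing and connectedness -/

theorem IsConsecutive.mem_link_iff (h : IsConsecutive σ F G) (hσ : M.IsFlag σ)
    (hF : M.rk F < M.rk H) (hG : M.rk H < M.rk G) :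
    H ∈ linkOf M.IsFlag σ ↔ M.IsFlat H ∧ F ⊆ H ∧ H ⊆ G := by
  refine ⟨fun hH => ⟨(hσ.mem_link.1 hH).2.1, subset_of_mem_link_of_rk_ge hH h.left_mem hF.le,
    subset_of_mem_link_of_rk_le hH h.right_mem hG.le⟩, fun ⟨hH, hFH, hHG⟩ =>
    h.mem_link hσ hH (hFH.ssubset_of_ne ?_) (hHG.ssubset_of_ne ?_)⟩
  · rintro rfl
    exact hF.false
  · rintro rfl
    exact hG.false

theorem IsConsecutive.covers_eq (h : IsConsecutive σ F G) (hσ : M.IsFlag σ)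
    (hr : M.rk F + 1 < M.rk G) :
    M.covers F G = (linkOf M.IsFlag σ).filter fun H => M.rk H = M.rk F + 1 := by
  ext H
  rw [mem_covers, mem_filter]
  by_cases hH : M.rk H = M.rk F + 1
  · simp [h.mem_link_iff hσ (by omega : M.rk F < M.rk H) (by omega), hH]
  · simp [hH]

theorem IsConsecutive.link_eq_covers (h : IsConsecutive σ F G) (hσ : M.IsFlag σ)
    (hcard : #σ + 1 = M.rk univ + 1) (hr : M.rk F + 1 < M.rk G) :
    linkOf M.IsFlag σ = M.covers F G := by
  have hσcard := hσ.card_missingRanks_add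
  rw [h.covers_eq hσ hr, eq_comm, filter_eq_self]
  exact fun H hH => card_le_one.1 (by omega : #(M.missingRanks σ) ≤ 1) _ (rk_mem_missingRanks hH)
    _ (h.mem_missingRanks (by omega) hr)

theorem IsFlag.sum_link_eq_zero (hσ : M.IsFlag σ) (hcard : #σ + 1 = M.rk univ + 1)
    {l : Finset α → ℝ} (hl : l ∈ modularFunctions α) (h0 : ∀ H ∈ σ, l H = 0) :
    ∑ H ∈ linkOf M.IsFlag σ, l H = 0 := by
  have hσcard := hσ.card_missingRanks_add
  obtain ⟨a, ha⟩ := card_pos.1 (by omega : 0 < #(M.missingRanks σ))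
  obtain ⟨F, G, hFG, hFa, haG⟩ := hσ.exists_isConsecutive ha
  rw [hFG.link_eq_covers hσ hcard (by omega)]
  simpa [h0 F hFG.left_mem, h0 G hFG.right_mem] using
    (hσ.isFlat hFG.left_mem).sum_covers_sub (hσ.isFlat hFG.right_mem) hFG.ssubset.1 hl

theorem IsFlag.link_nonempty (hσ : M.IsFlag σ) (hcard : #σ < M.rk univ + 1) :
    (linkOf M.IsFlag σ).Nonempty := by
  have hσcard := hσ.card_missingRanks_add
  obtain ⟨a, ha⟩ := card_pos.1 (by omega : 0 < #(M.missingRanks σ))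
  obtain ⟨H, hH, -⟩ := hσ.exists_mem_link_rk_eq ha
  exact ⟨H, hH⟩

theorem IsConsecutive.exists_cover_subset (h : IsConsecutive σ F G) (hσ : M.IsFlag σ)
    (hH : M.IsFlat H) (hFH : F ⊂ H) (hHG : H ⊂ G) :
    ∃ P ∈ linkOf M.IsFlag σ, P ⊆ H ∧ F ⊆ P ∧ M.rk P = M.rk F + 1 := by
  obtain ⟨i, hiH, hiF⟩ := exists_of_ssubset hFH
  have hrk := (hσ.isFlat h.left_mem).rk_closure_insert hiF
  have hPH := hH.closure_subset (insert_subset hiH hFH.1)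
  have hFP := M.subset_closure_insert i F
  have hFP' := hFP.ssubset_of_ne fun h => by rw [← h] at hrk; omega
  exact ⟨_, h.mem_link hσ (M.isFlat_closure _) hFP' (hPH.trans_ssubset hHG), hPH, hFP, hrk⟩

/-- The proper part of an interval of rank at least three in the lattice of flats is connected:
two atoms are joined through their span. -/
theorem IsConsecutive.eq_of_rk_add_two_lt {ι : Type*} (h : IsConsecutive σ F G)
    (hσ : M.IsFlag σ) (hr : M.rk F + 2 < M.rk G) (z : Finset α → ι)
    (hz : ∀ H ∈ linkOf M.IsFlag σ, ∀ K ∈ linkOf M.IsFlag σ, H ⊆ K → z H = z K)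
    (hH : M.IsFlat H) (hFH : F ⊂ H) (hHG : H ⊂ G) (hK : M.IsFlat K) (hFK : F ⊂ K) (hKG : K ⊂ G) :
    z H = z K := by
  obtain ⟨P, hP, hPH, hFP, hPr⟩ := h.exists_cover_subset hσ hH hFH hHG
  obtain ⟨Q, hQ, hQK, hFQ, hQr⟩ := h.exists_cover_subset hσ hK hFK hKG
  have hPflat := (hσ.mem_link.1 hP).2.1
  have hQflat := (hσ.mem_link.1 hQ).2.1
  suffices z P = z Q by
    rw [← hz P hP H (h.mem_link hσ hH hFH hHG) hPH, this,
      hz Q hQ K (h.mem_link hσ hK hFK hKG) hQK]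
  by_cases hQP : Q ⊆ P
  · exact (hz Q hQ P hP hQP).symm
  obtain ⟨j, hjQ, hjP⟩ := not_subset.1 hQP
  have hjF : j ∉ F := fun hj => hjP (hFP hj)
  have hJr := hPflat.rk_closure_insert hjP
  have hPJ := M.subset_closure_insert j P
  have hQJ : Q ⊆ M.closure (insert j P) := by
    rw [← (hσ.isFlat h.left_mem).closure_insert_eq hjF hQflat hFQ hjQ hQr]
    exact M.closure.monotone (insert_subset_insert j hFP)
  have hJG : M.closure (insert j P) ⊆ G := (hσ.isFlat h.right_mem).closure_subset
    (insert_subset (hKG.1 (hQK hjQ)) (hPH.trans hHG.1))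
  have hJ : M.closure (insert j P) ∈ linkOf M.IsFlag σ :=
    h.mem_link hσ (M.isFlat_closure _)
      ((hFP.trans hPJ).ssubset_of_ne fun h => by rw [← h] at hJr; omega)
      (hJG.ssubset_of_ne fun h => by rw [h] at hJr; omega)
  rw [hz P hP _ hJ hPJ, hz Q hQ _ hJ hQJ]

theorem IsFlag.eq_of_forall_mem_link_insert {ι : Type*} (hσ : M.IsFlag σ)
    (hcard : #σ + 2 < M.rk univ + 1) (z : Finset α → ι)
    (hz : ∀ H ∈ linkOf M.IsFlag σ, ∀ K ∈ linkOf M.IsFlag (insert H σ), z H = z K) :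
    ∀ H ∈ linkOf M.IsFlag σ, ∀ K ∈ linkOf M.IsFlag σ, z H = z K := by
  have hz' : ∀ H ∈ linkOf M.IsFlag σ, ∀ K ∈ linkOf M.IsFlag σ, H ⊆ K → z H = z K := by
    intro H hH K hK h
    by_cases hne : H = K
    · rw [hne]
    · exact hz H hH K (hσ.mem_link_insert hH hK hne (Or.inl h))
  intro H hH K hK
  obtain ⟨F, G, hFG, hFH, hHG⟩ := hσ.exists_isConsecutive (rk_mem_missingRanks hH)
  have hFH' := subset_of_mem_link_of_rk_ge hH hFG.left_mem hFH.le
  have hHG' := subset_of_mem_link_of_rk_le hH hFG.right_mem hHG.le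
  obtain ⟨hKσ, hKflat, hKcomp⟩ := hσ.mem_link.1 hK
  obtain ⟨hHσ, hHflat, -⟩ := hσ.mem_link.1 hH
  rcases hKcomp F hFG.left_mem with hKF | hFK
  · exact (hz' K hK H hH (hKF.trans hFH')).symm
  rcases (hKcomp G hFG.right_mem).symm with hGK | hKG
  · exact hz' H hH K hK (hHG'.trans hGK)
  by_cases hr : M.rk F + 2 < M.rk G
  · exact hFG.eq_of_rk_add_two_lt hσ hr z hz' hHflat
      (hFH'.ssubset_of_ne (by rintro rfl; exact hHσ hFG.left_mem))
      (hHG'.ssubset_of_ne (by rintro rfl; exact hHσ hFG.right_mem)) hKflat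
      (hFK.ssubset_of_ne (by rintro rfl; exact hKσ hFG.left_mem))
      (hKG.ssubset_of_ne (by rintro rfl; exact hKσ hFG.right_mem))
  have hσcard := hσ.card_missingRanks_add
  obtain ⟨b, hb, hbne⟩ := exists_mem_ne (by omega : 1 < #(M.missingRanks σ)) (M.rk F + 1)
  obtain ⟨L, hL, rfl⟩ := hσ.exists_mem_link_rk_eq hb
  rcases lt_or_gt_of_ne hbne with h | h
  · have hLF := subset_of_mem_link_of_rk_le hL hFG.left_mem (by omega)
    rw [← hz' L hL H hH (hLF.trans hFH'), hz' L hL K hK (hLF.trans hFK)]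
  · have hGL := subset_of_mem_link_of_rk_ge hL hFG.right_mem (by omega)
    rw [hz' H hH L hL (hHG'.trans hGL), hz' K hK L hL (hKG.trans hGL)]

variable (M)

/-- The Bergman fan of the matroid. The ray of a flat `H` is spanned by its indicator vector; that
of the flat `univ` spans the lineality space, and `∅` stands for a dummy coordinate by which
constant functions count as linear. -/
def bergmanFan : BalancedFan (Finset α) where
  IsCone := M.IsFlag
  lin := modularFunctions α
  dim := M.rk univ + 1
  isCone_of_subset_of_subset _ _ _ hρ hτ hρσ hστ :=
    ⟨fun _ hH => hτ.isFlat (hστ hH), hτ.isChain.mono hστ, hρσ hρ.empty_mem, hρσ hρ.univ_mem⟩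
  exists_lin_eq _ hσ := exists_modularFunctions_eq_of_isChain hσ.isChain
  sum_link_eq_zero _ hσ hcard _ hl := hσ.sum_link_eq_zero hcard hl
  link_nonempty _ hσ hcard := hσ.link_nonempty hcard
  connected _ hσ hcard := hσ.eq_of_forall_mem_link_insert hcard

end LooplessRankFunction

end BergmanFan

section HodgeIndex

open Finset

/-- Aczél's inequality. -/
theorem mul_sub_sum_sq_le_sq_sub_sum {ι : Type*} (s : Finset ι) (p q : ℝ) (f g : ι → ℝ)
    (h : 0 < q * q - ∑ i ∈ s, g i * g i) :
    (p * p - ∑ i ∈ s, f i * f i) * (q * q - ∑ i ∈ s, g i * g i) ≤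
      (p * q - ∑ i ∈ s, f i * g i) ^ 2 := by
  have hsum : ∑ i ∈ s, (q * f i - p * g i) ^ 2 = q ^ 2 * ∑ i ∈ s, f i * f i -
      2 * p * q * ∑ i ∈ s, f i * g i + p ^ 2 * ∑ i ∈ s, g i * g i := by
    simp only [mul_sum, ← sum_sub_distrib, ← sum_add_distrib]
    exact sum_congr rfl fun i _ => by ring
  have hnonneg : 0 ≤ ∑ i ∈ s, (q * f i - p * g i) ^ 2 := sum_nonneg fun _ _ => sq_nonneg _
  have hq : 0 < q ^ 2 := by
    linarith [sum_nonneg fun i (_ : i ∈ s) => mul_self_nonneg (g i), pow_two q]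
  rw [hsum] at hnonneg
  generalize ∑ i ∈ s, f i * f i = A at *
  generalize ∑ i ∈ s, g i * g i = B at *
  generalize ∑ i ∈ s, f i * g i = C at *
  refine le_of_mul_le_mul_left (sub_nonneg.1 ?_) hq
  calc 0 ≤ (q * (p * q - C) - p * (q * q - B)) ^ 2 +
        (q * q - B) * (q ^ 2 * A - 2 * p * q * C + p ^ 2 * B) :=
      add_nonneg (sq_nonneg _) (mul_nonneg h.le hnonneg)
    _ = q ^ 2 * (p * q - C) ^ 2 - q ^ 2 * ((p * p - A) * (q * q - B)) := by ring

namespace LooplessRankFunction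

variable {α : Type*} [DecidableEq α] {σ : Finset (Finset α)} {F G F' G' H L P : Finset α}

theorem IsConsecutive.insert_left (h : IsConsecutive σ F G) (hFL : F ⊂ L) (hLG : L ⊂ G) :
    IsConsecutive (insert L σ) F L where
  left_mem := mem_insert_of_mem h.left_mem
  right_mem := mem_insert_self L σ
  ssubset := hFL
  subset_or_subset := (forall_mem_insert ..).2
    ⟨Or.inr Subset.rfl, fun _ hK => (h.subset_or_subset hK).imp_right hLG.1.trans⟩

theorem IsConsecutive.insert_right (h : IsConsecutive σ F G) (hFL : F ⊂ L) (hLG : L ⊂ G) :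
    IsConsecutive (insert L σ) L G where
  left_mem := mem_insert_self L σ
  right_mem := mem_insert_of_mem h.right_mem
  ssubset := hLG
  subset_or_subset := (forall_mem_insert ..).2
    ⟨Or.inl Subset.rfl, fun _ hK => (h.subset_or_subset hK).imp_left hFL.1.trans'⟩

theorem IsConsecutive.insert_of_subset_left (h : IsConsecutive σ F G) (hHF : H ⊆ F) :
    IsConsecutive (insert H σ) F G where
  left_mem := mem_insert_of_mem h.left_mem
  right_mem := mem_insert_of_mem h.right_mem
  ssubset := h.ssubset
  subset_or_subset := (forall_mem_insert ..).2 ⟨Or.inl hHF, h.subset_or_subset⟩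

theorem IsConsecutive.insert_of_ne (h : IsConsecutive σ F G) (h' : IsConsecutive σ F' G')
    (hne : F ≠ F') (hFH : F ⊆ H) (hHG : H ⊆ G) : IsConsecutive (insert H σ) F' G' where
  left_mem := mem_insert_of_mem h'.left_mem
  right_mem := mem_insert_of_mem h'.right_mem
  ssubset := h'.ssubset
  subset_or_subset := (forall_mem_insert ..).2 ⟨by
    rcases h'.subset_or_subset h.left_mem with hFF' | hG'F
    · rcases h.subset_or_subset h'.left_mem with hF'F | hGF'
      · exact absurd (hFF'.antisymm hF'F) hne
      · exact Or.inl (hHG.trans hGF')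
    · exact Or.inr (hG'F.trans hFH), h'.subset_or_subset⟩

variable [Fintype α] {M : LooplessRankFunction α} {a b : ℕ} {x y : Finset α → ℝ}

theorem IsFlat.sum_covers_sum_covers (hF : M.IsFlat F) (hG : M.IsFlat G) (hP : P ∈ M.covers F G)
    (y : Finset α → ℝ) :
    ∑ L ∈ M.covers P G, (∑ Q ∈ M.covers F L, y Q - y P) = ∑ Q ∈ M.covers F G, y Q - y P := by
  obtain ⟨l, hl, hly⟩ := hF.exists_modularFunctions_sub_eq y
  have sum_eq : ∀ L, M.IsFlat L → F ⊆ L → ∑ Q ∈ M.covers F L, y Q = l L - l F := by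
    intro L hL hFL
    rw [← hF.sum_covers_sub hL hFL hl]
    refine sum_congr rfl fun Q hQ => ?_
    obtain ⟨hQ, hFQ, -, hr⟩ := mem_covers.1 hQ
    exact (hly Q (mem_covers.2 ⟨hQ, hFQ, subset_univ Q, hr⟩)).symm
  obtain ⟨hPflat, hFP, hPG, hr⟩ := mem_covers.1 hP
  rw [sum_eq G hG (hFP.trans hPG), ← hly P (mem_covers.2 ⟨hPflat, hFP, subset_univ P, hr⟩),
    sub_sub_sub_cancel_right, ← hPflat.sum_covers_sub hG hPG hl]
  refine sum_congr rfl fun L hL => ?_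
  obtain ⟨hL, hPL, -, -⟩ := mem_covers.1 hL
  rw [sum_eq L hL (hFP.trans hPL), sub_sub_sub_cancel_right]

/-! ### Stars of rank one and two -/

theorem IsConsecutive.deg_singleton (h : IsConsecutive σ F G) (hσ : M.IsFlag σ)
    (hcard : #σ + 1 = M.rk univ + 1) (hr : M.rk F + 1 < M.rk G) (y : Finset α → ℝ) :
    M.bergmanFan.deg [y] σ = ∑ K ∈ M.covers F G, (y K - y F) - (y G - y F) := by
  have hl := M.bergmanFan.linPart_mem σ y
  have hly : ∀ K ∈ σ, M.bergmanFan.linPart σ y K = y K := fun K hK =>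
    M.bergmanFan.linPart_apply hσ y hK
  rw [← hly F h.left_mem, ← hly G h.right_mem, ← (hσ.isFlat h.left_mem).sum_covers_sub
    (hσ.isFlat h.right_mem) h.ssubset.1 hl, ← sum_sub_distrib, ← h.link_eq_covers hσ hcard hr]
  exact sum_congr rfl fun K _ => by simp [BalancedFan.deg]

theorem IsFlag.sum_link_eq_add (hσ : M.IsFlag σ) (hcard : #σ + 2 = M.rk univ + 1)
    (ha : a ∈ M.missingRanks σ) (hb : b ∈ M.missingRanks σ) (hab : a ≠ b) (f : Finset α → ℝ) :
    ∑ H ∈ linkOf M.IsFlag σ, f H = ∑ H ∈ linkOf M.IsFlag σ with M.rk H = a, f H +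
      ∑ H ∈ linkOf M.IsFlag σ with M.rk H = b, f H := by
  have hσcard := hσ.card_missingRanks_add
  have hmiss : {a, b} = M.missingRanks σ := eq_of_subset_of_card_le
    (insert_subset ha (singleton_subset_iff.2 hb)) (by rw [card_pair hab]; omega)
  rw [← sum_filter_add_sum_filter_not _ fun H => M.rk H = a]
  congr 1
  refine sum_congr (filter_congr fun H hH => ?_) fun _ _ => rfl
  have hrk : M.rk H = a ∨ M.rk H = b := by simpa [← hmiss] using rk_mem_missingRanks hH
  omega

/-! ### Two intervals of rank two -/

theorem IsConsecutive.deg_singleton_insert_of_ne (h : IsConsecutive σ F G)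
    (h' : IsConsecutive σ F' G') (hσ : M.IsFlag σ) (hcard : #σ + 2 = M.rk univ + 1)
    (hr : M.rk F + 1 < M.rk G) (hr' : M.rk F' + 1 < M.rk G') (hne : F ≠ F')
    (hy : ∀ K ∈ σ, y K = 0) (hH : H ∈ M.covers F G) :
    M.bergmanFan.deg [y] (insert H σ) = ∑ K ∈ M.covers F' G', y K := by
  obtain ⟨-, hFH, hHG, -⟩ := mem_covers.1 hH
  obtain ⟨hHσ, hins⟩ := mem_linkOf.1 (mem_filter.1 (h.covers_eq hσ hr ▸ hH)).1
  rw [(h.insert_of_ne h' hne hFH hHG).deg_singleton hins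
    (by rw [card_insert_of_notMem hHσ]; omega) hr']
  simp [hy F' h'.left_mem, hy G' h'.right_mem]

theorem IsConsecutive.deg_pair_of_ne (h : IsConsecutive σ F G) (h' : IsConsecutive σ F' G')
    (hσ : M.IsFlag σ) (hcard : #σ + 2 = M.rk univ + 1) (hr : M.rk F + 1 < M.rk G)
    (hr' : M.rk F' + 1 < M.rk G') (hne : F ≠ F') (hx : ∀ K ∈ σ, x K = 0)
    (hy : ∀ K ∈ σ, y K = 0) :
    M.bergmanFan.deg [x, y] σ =
      (∑ K ∈ M.covers F G, x K) * ∑ K ∈ M.covers F' G', y K +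
        (∑ K ∈ M.covers F' G', x K) * ∑ K ∈ M.covers F G, y K := by
  have hrne : M.rk F + 1 ≠ M.rk F' + 1 := fun hF =>
    hne (hσ.rk_injOn h.left_mem h'.left_mem (by omega))
  rw [M.bergmanFan.deg_cons_of_forall_eq_zero hx, BalancedFan.link,
    show M.bergmanFan.IsCone = M.IsFlag from rfl, hσ.sum_link_eq_add hcard
      (h.mem_missingRanks (by omega) hr) (h'.mem_missingRanks (by omega) hr') hrne,
    ← h.covers_eq hσ hr, ← h'.covers_eq hσ hr', sum_mul, sum_mul]
  exact congrArg₂ _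
    (sum_congr rfl fun H hH => by
      rw [h.deg_singleton_insert_of_ne h' hσ hcard hr hr' hne hy hH])
    (sum_congr rfl fun H hH => by
      rw [h'.deg_singleton_insert_of_ne h hσ hcard hr' hr hne.symm hy hH])

/-! ### One interval of rank three -/

variable (M) in
/-- The value at `L` of `y`, corrected by a function that is modular on `[F, L]` so as to vanish
at the atoms of that interval. -/
def defect (F : Finset α) (y : Finset α → ℝ) (L : Finset α) : ℝ := y L - ∑ P ∈ M.covers F L, y P

theorem IsConsecutive.deg_singleton_insert_of_rk_eq_add_two (h : IsConsecutive σ F G)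
    (hσ : M.IsFlag σ) (hcard : #σ + 2 = M.rk univ + 1) (hr : M.rk F + 2 < M.rk G)
    (hy : ∀ K ∈ σ, y K = 0) (hL : L ∈ linkOf M.IsFlag σ) (hLr : M.rk L = M.rk F + 2) :
    M.bergmanFan.deg [y] (insert L σ) = -M.defect F y L := by
  obtain ⟨hLσ, hins⟩ := mem_linkOf.1 hL
  obtain ⟨-, hFL, hLG⟩ := (h.mem_link_iff hσ (by omega) (by omega)).1 hL
  have hFL : F ⊂ L := hFL.ssubset_of_ne (by rintro rfl; omega)
  have hLG : L ⊂ G := hLG.ssubset_of_ne (by rintro rfl; omega)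
  rw [(h.insert_left hFL hLG).deg_singleton hins (by rw [card_insert_of_notMem hLσ]; omega)
    (by omega)]
  simp [hy F h.left_mem, defect]

theorem IsConsecutive.deg_singleton_insert_of_mem_covers (h : IsConsecutive σ F G)
    (hσ : M.IsFlag σ) (hcard : #σ + 2 = M.rk univ + 1) (hr : M.rk F + 2 < M.rk G)
    (hy : ∀ K ∈ σ, y K = 0) (hP : P ∈ M.covers F G) :
    M.bergmanFan.deg [y] (insert P σ) =
      ∑ Q ∈ M.covers F G, y Q + ∑ L ∈ M.covers P G, M.defect F y L := by
  obtain ⟨-, hFP, hPG, hPr⟩ := mem_covers.1 hP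
  obtain ⟨hPσ, hins⟩ := mem_linkOf.1 (mem_filter.1 (h.covers_eq hσ (by omega) ▸ hP)).1
  have hFP : F ⊂ P := hFP.ssubset_of_ne (by rintro rfl; omega)
  have hPG : P ⊂ G := hPG.ssubset_of_ne (by rintro rfl; omega)
  have hsum := (hσ.isFlat h.left_mem).sum_covers_sum_covers (hσ.isFlat h.right_mem) hP y
  rw [(h.insert_right hFP hPG).deg_singleton hins (by rw [card_insert_of_notMem hPσ]; omega)
    (by omega), hy G h.right_mem]
  simp only [defect, sum_sub_distrib] at hsum ⊢
  linarith

theorem IsConsecutive.mem_covers_and_mem_covers_iff (h : IsConsecutive σ F G) (hσ : M.IsFlag σ)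
    (hr : M.rk F + 2 < M.rk G) :
    P ∈ M.covers F G ∧ L ∈ M.covers P G ↔
      P ∈ M.covers F L ∧ L ∈ (linkOf M.IsFlag σ).filter fun L => M.rk L = M.rk F + 2 := by
  by_cases hL : M.rk L = M.rk F + 2
  · rw [mem_filter, h.mem_link_iff hσ (by omega) (by omega)]
    simp only [mem_covers]
    grind
  · simp only [mem_covers, mem_filter]
    grind

theorem IsConsecutive.deg_pair_of_rk_add_two_lt (h : IsConsecutive σ F G) (hσ : M.IsFlag σ)
    (hcard : #σ + 2 = M.rk univ + 1) (hr : M.rk F + 2 < M.rk G) (hx : ∀ K ∈ σ, x K = 0)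
    (hy : ∀ K ∈ σ, y K = 0) :
    M.bergmanFan.deg [x, y] σ = (∑ P ∈ M.covers F G, x P) * ∑ P ∈ M.covers F G, y P -
      ∑ L ∈ linkOf M.IsFlag σ with M.rk L = M.rk F + 2, M.defect F x L * M.defect F y L := by
  have hswap : ∑ P ∈ M.covers F G, ∑ L ∈ M.covers P G, x P * M.defect F y L =
      ∑ L ∈ linkOf M.IsFlag σ with M.rk L = M.rk F + 2,
        ∑ P ∈ M.covers F L, x P * M.defect F y L :=
    sum_comm' fun _ _ => h.mem_covers_and_mem_covers_iff hσ hr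
  have hatoms : ∀ P ∈ M.covers F G, x P * M.bergmanFan.deg [y] (insert P σ) =
      x P * ∑ Q ∈ M.covers F G, y Q + ∑ L ∈ M.covers P G, x P * M.defect F y L := fun P hP => by
    rw [h.deg_singleton_insert_of_mem_covers hσ hcard hr hy hP, mul_add, mul_sum (M.covers P G)]
  have hlines : ∀ L ∈ (linkOf M.IsFlag σ).filter (M.rk · = M.rk F + 2),
      x L * M.bergmanFan.deg [y] (insert L σ) = -(x L * M.defect F y L) := fun L hL => by
    rw [h.deg_singleton_insert_of_rk_eq_add_two hσ hcard hr hy (mem_filter.1 hL).1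
      (mem_filter.1 hL).2, mul_neg]
  rw [M.bergmanFan.deg_cons_of_forall_eq_zero hx, BalancedFan.link,
    show M.bergmanFan.IsCone = M.IsFlag from rfl, hσ.sum_link_eq_add hcard
      (h.mem_missingRanks (by omega) (by omega : M.rk F + 1 < M.rk G))
      (h.mem_missingRanks (by omega) hr) (by omega), ← h.covers_eq hσ (by omega),
    sum_congr rfl hatoms, sum_congr rfl hlines, sum_add_distrib, ← sum_mul, hswap, add_assoc,
    ← sum_add_distrib, sub_eq_add_neg, ← sum_neg_distrib]
  refine congrArg _ (sum_congr rfl fun L _ => ?_)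
  rw [← sum_mul, defect, defect]
  ring

theorem IsFlag.deg_mul_deg_le_sq (hσ : M.IsFlag σ) (hcard : #σ + 2 = M.rk univ + 1)
    (hx : ∀ K ∈ σ, x K = 0) (hy : ∀ K ∈ σ, y K = 0) (hpos : 0 < M.bergmanFan.deg [y, y] σ) :
    M.bergmanFan.deg [x, x] σ * M.bergmanFan.deg [y, y] σ ≤ M.bergmanFan.deg [x, y] σ ^ 2 := by
  revert hpos
  have hσcard := hσ.card_missingRanks_add
  obtain ⟨a, ha⟩ := card_pos.1 (by omega : 0 < #(M.missingRanks σ))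
  obtain ⟨F, G, h, hFa, haG⟩ := hσ.exists_isConsecutive ha
  by_cases hr : M.rk F + 2 < M.rk G
  · simp only [h.deg_pair_of_rk_add_two_lt hσ hcard hr hx hy,
      h.deg_pair_of_rk_add_two_lt hσ hcard hr hx hx, h.deg_pair_of_rk_add_two_lt hσ hcard hr hy hy]
    exact mul_sub_sum_sq_le_sq_sub_sum _ _ _ _ _
  obtain ⟨b, hb, hba⟩ := exists_mem_ne (by omega : 1 < #(M.missingRanks σ)) a
  obtain ⟨F', G', h', hFb, hbG⟩ := hσ.exists_isConsecutive hb
  have hne : F ≠ F' := by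
    rintro rfl
    have := M.rk_mono ((h'.subset_or_subset h.right_mem).resolve_left h.ssubset.2)
    omega
  simp only [h.deg_pair_of_ne h' hσ hcard (by omega) (by omega) hne hx hy,
    h.deg_pair_of_ne h' hσ hcard (by omega) (by omega) hne hx hx,
    h.deg_pair_of_ne h' hσ hcard (by omega) (by omega) hne hy hy]
  intro _
  linarith [sq_nonneg ((∑ K ∈ M.covers F G, x K) * (∑ K ∈ M.covers F' G', y K) -
    (∑ K ∈ M.covers F' G', x K) * ∑ K ∈ M.covers F G, y K)]

/-- The Hodge index theorem for two-dimensional stars. -/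
theorem isLorentzian_degForm_nil (hσ : M.IsFlag σ) (hcard : #σ + 2 = M.bergmanFan.dim) :
    IsLorentzian (M.bergmanFan.degForm [] σ) := by
  intro x v
  have hdim : #σ + ([] : List (Finset α → ℝ)).length + 2 = M.bergmanFan.dim := hcard
  simp only [← M.bergmanFan.degForm_sub_linPart hσ hdim v,
    ← M.bergmanFan.degForm_sub_linPart hσ hdim x]
  exact hσ.deg_mul_deg_le_sq hcard (M.bergmanFan.sub_linPart_apply hσ x)
    (M.bergmanFan.sub_linPart_apply hσ v)

end LooplessRankFunction

end HodgeIndex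

section LogConcavity

open Finset

namespace LooplessRankFunction

variable {α : Type*} [DecidableEq α] {σ : Finset (Finset α)} {F G H K T : Finset α} {i j : α}

/-- The weight of the pair `(i, j)` for the flag `σ`: it is `2`, `1` or `0` according to whether
`j` enters the flag before, together with, or after `i`. -/
def flagWeight (σ : Finset (Finset α)) (i j : α) : ℝ :=
  1 + (if ∀ S ∈ σ, i ∈ S → j ∈ S then 1 else 0) - if ∀ S ∈ σ, j ∈ S → i ∈ S then 1 else 0

theorem flagWeight_add (σ : Finset (Finset α)) (i j : α) :
    flagWeight σ i j + flagWeight σ j i = 2 := by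
  rw [flagWeight, flagWeight]
  ring

theorem flagWeight_nonneg (σ : Finset (Finset α)) (i j : α) : 0 ≤ flagWeight σ i j := by
  rw [flagWeight]
  split_ifs <;> norm_num

theorem IsConsecutive.flagWeight_pos (h : IsConsecutive σ F G) (hi : i ∉ F) (hj : j ∈ G) :
    0 < flagWeight σ i j := by
  have hij : ∀ S ∈ σ, i ∈ S → j ∈ S := fun S hS hiS =>
    (h.subset_or_subset hS).elim (fun hSF => absurd (hSF hiS) hi) fun hGS => hGS hj
  rw [flagWeight, if_pos hij]
  split_ifs <;> norm_num

/-- The class `β` of Adiprasito, Huh and Katz, as a piecewise linear function on the Bergman fan. -/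
def betaClass : Finset α → ℝ := -Pi.single ∅ 1

theorem IsConsecutive.mem_modularFunctions_and_eqOn_betaClass (h : IsConsecutive σ ∅ G)
    (hi : i ∈ G) :
    (fun H => if i ∈ H then (0 : ℝ) else -1) ∈ modularFunctions α ∧
      ∀ K ∈ σ, (if i ∈ K then (0 : ℝ) else -1) = betaClass K := by
  refine ⟨⟨-1, Pi.single i 1, fun H => by by_cases hiH : i ∈ H <;> simp [hiH]⟩, fun K hK => ?_⟩
  rcases h.subset_or_subset hK with hK | hGK
  · simp [betaClass, subset_empty.1 hK]
  · have hK0 : K ≠ ∅ := ne_empty_of_mem (hGK hi)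
    simp [betaClass, hK0, hGK hi]

variable [Fintype α] {M : LooplessRankFunction α} {k m : ℕ} {vs : List (Finset α → ℝ)}

theorem IsFlag.ssubset_or_ssubset (hσ : M.IsFlag σ) (hH : H ∈ linkOf M.IsFlag σ) (hK : K ∈ σ) :
    H ⊂ K ∨ K ⊂ H := by
  obtain ⟨hHσ, -, hcomp⟩ := hσ.mem_link.1 hH
  have hne : H ≠ K := by rintro rfl; exact hHσ hK
  exact (hcomp K hK).imp (·.ssubset_of_ne hne) (·.ssubset_of_ne hne.symm)

theorem IsFlag.ssubset_univ (hσ : M.IsFlag σ) (hH : H ∈ linkOf M.IsFlag σ) : H ⊂ univ :=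
  (hσ.ssubset_or_ssubset hH hσ.univ_mem).resolve_right fun h => h.2 (subset_univ H)

theorem IsFlag.empty_ssubset (hσ : M.IsFlag σ) (hH : H ∈ linkOf M.IsFlag σ) : ∅ ⊂ H :=
  (hσ.ssubset_or_ssubset hH hσ.empty_mem).resolve_left fun h => h.2 (empty_subset H)

theorem IsFlag.ssuperset_of_mem_of_notMem (hσ : M.IsFlag σ) (hH : H ∈ linkOf M.IsFlag σ)
    (hK : K ∈ σ) (hi : i ∈ H) (hiK : i ∉ K) : K ⊂ H :=
  (hσ.ssubset_or_ssubset hH hK).resolve_left fun h => hiK (h.1 hi)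

theorem IsFlag.ssubset_of_mem_of_notMem (hσ : M.IsFlag σ) (hH : H ∈ linkOf M.IsFlag σ)
    (hK : K ∈ σ) (hi : i ∈ K) (hiH : i ∉ H) : H ⊂ K :=
  (hσ.ssubset_or_ssubset hH hK).resolve_right fun h => hiH (h.1 hi)

theorem IsFlag.exists_isConsecutive_univ [Nonempty α] (hσ : M.IsFlag σ) :
    ∃ T, IsConsecutive σ T univ := by
  obtain ⟨T, hT, hmax⟩ := exists_max_image (σ.erase univ) M.rk
    ⟨∅, mem_erase.2 ⟨univ_nonempty.ne_empty.symm, hσ.empty_mem⟩⟩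
  obtain ⟨hTne, hTσ⟩ := mem_erase.1 hT
  refine ⟨T, hTσ, hσ.univ_mem, (subset_univ T).ssubset_of_ne hTne, fun K hK => ?_⟩
  by_cases hKne : K = univ
  · exact Or.inr hKne.ge
  · exact Or.inl (hσ.subset_of_rk_le hK hTσ (hmax K (mem_erase.2 ⟨hKne, hK⟩)))

theorem IsFlag.exists_isConsecutive_empty [Nonempty α] (hσ : M.IsFlag σ) :
    ∃ G, IsConsecutive σ ∅ G := by
  obtain ⟨G, hG, hmin⟩ := exists_min_image (σ.erase ∅) M.rk
    ⟨univ, mem_erase.2 ⟨univ_nonempty.ne_empty, hσ.univ_mem⟩⟩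
  obtain ⟨hGne, hGσ⟩ := mem_erase.1 hG
  refine ⟨G, hσ.empty_mem, hGσ, (empty_subset G).ssubset_of_ne hGne.symm, fun K hK => ?_⟩
  by_cases hKne : K = ∅
  · exact Or.inl hKne.le
  · exact Or.inr (hσ.subset_of_rk_le hGσ hK (hmin K (mem_erase.2 ⟨hKne, hK⟩)))

/-! ### An ample function -/

theorem sum_sum_compl_of_add_eq_two (w : α → α → ℝ) (hw : ∀ i j, w i j + w j i = 2)
    (K : Finset α) :
    ∑ i ∈ K, ∑ j ∈ Kᶜ, w i j = ∑ i ∈ K, ∑ j, w i j - (#K : ℝ) ^ 2 := by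
  have hsq : ∑ i ∈ K, ∑ j ∈ K, w i j = (#K : ℝ) ^ 2 := by
    have : ∑ i ∈ K, ∑ j ∈ K, w i j + ∑ i ∈ K, ∑ j ∈ K, w i j = 2 * (#K : ℝ) ^ 2 := by
      nth_rewrite 2 [sum_comm]
      simp only [← sum_add_distrib, hw, sum_const, nsmul_eq_mul]
      ring
    linarith
  rw [← hsq, ← sum_sub_distrib]
  exact sum_congr rfl fun i _ => by rw [← sum_compl_add_sum K, add_sub_cancel_right]

theorem IsFlag.flagWeight_eq_zero (hσ : M.IsFlag σ) (hK : K ∈ σ) (hi : i ∈ K) (hj : j ∉ K) :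
    flagWeight σ i j = 0 := by
  have hji : ∀ S ∈ σ, j ∈ S → i ∈ S := fun S hS hjS =>
    (hσ.isChain.total hS hK).elim (fun h => absurd (h hjS) hj) fun h => h hi
  rw [flagWeight, if_neg fun h => hj (h K hK hi), if_pos hji]
  norm_num

variable (M)

theorem isAmple_neg_sq_card : M.bergmanFan.IsAmple fun H => -(#H : ℝ) ^ 2 := by
  intro σ hσ _
  refine ⟨fun K => 0 + ∑ i ∈ K, -∑ j, flagWeight σ i j, ⟨0, _, fun _ => rfl⟩, fun K hK => ?_,
    fun K hK => ?_⟩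
  · have hsum : ∑ i ∈ K, ∑ j ∈ Kᶜ, flagWeight σ i j = 0 := sum_eq_zero fun i hi =>
      sum_eq_zero fun j hj => hσ.flagWeight_eq_zero hK hi (mem_compl.1 hj)
    rw [sum_sum_compl_of_add_eq_two _ (flagWeight_add σ)] at hsum
    simp only [sum_neg_distrib]
    linarith
  · obtain ⟨F, G, hFG, hFK, hKG⟩ := hσ.exists_isConsecutive (rk_mem_missingRanks hK)
    obtain ⟨i, hiK, hiF⟩ := not_subset.1 fun h : K ⊆ F => (M.rk_mono h).not_gt hFK
    obtain ⟨j, hjG, hjK⟩ := not_subset.1 fun h : G ⊆ K => (M.rk_mono h).not_gt hKG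
    have hsum : 0 < ∑ i ∈ K, ∑ j ∈ Kᶜ, flagWeight σ i j :=
      sum_pos' (fun i _ => sum_nonneg fun j _ => flagWeight_nonneg σ i j) ⟨i, hiK,
        sum_pos' (fun j _ => flagWeight_nonneg σ i j)
          ⟨j, mem_compl.2 hjK, hFG.flagWeight_pos hiF hjG⟩⟩
    rw [sum_sum_compl_of_add_eq_two _ (flagWeight_add σ)] at hsum
    simp only [sum_neg_distrib]
    linarith

/-! ### The classes `α` and `β` -/

variable {M}

/-- The class `α` of Adiprasito, Huh and Katz, as a piecewise linear function on the Bergman fan. -/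
def alphaClass : Finset α → ℝ := -Pi.single univ 1

theorem IsFlag.alphaClass_apply (hσ : M.IsFlag σ) (hH : H ∈ linkOf M.IsFlag σ) :
    alphaClass H = 0 := by
  simp [alphaClass, (hσ.ssubset_univ hH).ne]

theorem IsFlag.betaClass_apply (hσ : M.IsFlag σ) (hH : H ∈ linkOf M.IsFlag σ) :
    betaClass H = 0 := by
  simp [betaClass, (hσ.empty_ssubset hH).ne']

theorem IsConsecutive.mem_modularFunctions_and_eqOn_alphaClass (h : IsConsecutive σ T univ)
    (hi : i ∉ T) :
    (fun H => if i ∈ H then (-1 : ℝ) else 0) ∈ modularFunctions α ∧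
      ∀ K ∈ σ, (if i ∈ K then (-1 : ℝ) else 0) = alphaClass K := by
  refine ⟨⟨0, Pi.single i (-1), fun H => by simp⟩, fun K hK => ?_⟩
  rcases h.subset_or_subset hK with hKT | hK
  · have hKu : K ≠ univ := by rintro rfl; exact hi (hKT (mem_univ i))
    have hiK : i ∉ K := fun hiK => hi (hKT hiK)
    simp [alphaClass, hKu, hiK]
  · simp [alphaClass, univ_subset_iff.1 hK]

variable (M) in
theorem isNef_alphaClass [Nonempty α] : M.bergmanFan.IsNef alphaClass := by
  intro σ hσ _
  obtain ⟨T, h⟩ := hσ.exists_isConsecutive_univ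
  obtain ⟨i, -, hi⟩ := exists_of_ssubset h.ssubset
  obtain ⟨hl, heq⟩ := h.mem_modularFunctions_and_eqOn_alphaClass hi
  refine ⟨_, hl, heq, fun H hH => ?_⟩
  rw [hσ.alphaClass_apply hH]
  split_ifs <;> norm_num

variable (M) in
theorem isNef_betaClass [Nonempty α] : M.bergmanFan.IsNef betaClass := by
  intro σ hσ _
  obtain ⟨G, h⟩ := hσ.exists_isConsecutive_empty
  obtain ⟨i, hi, -⟩ := exists_of_ssubset h.ssubset
  obtain ⟨hl, heq⟩ := h.mem_modularFunctions_and_eqOn_betaClass hi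
  refine ⟨_, hl, heq, fun H hH => ?_⟩
  rw [hσ.betaClass_apply hH]
  split_ifs <;> norm_num

theorem IsConsecutive.deg_alphaClass_cons (h : IsConsecutive σ T univ) (hσ : M.IsFlag σ)
    (hcard : #σ + vs.length + 1 = M.rk univ + 1) (hi : i ∉ T) :
    M.bergmanFan.deg (alphaClass :: vs) σ =
      ∑ H ∈ linkOf M.IsFlag σ with i ∈ H, M.bergmanFan.deg vs (insert H σ) := by
  obtain ⟨hl, heq⟩ := h.mem_modularFunctions_and_eqOn_alphaClass hi
  rw [M.bergmanFan.deg_cons_of_eqOn hσ hcard hl heq, sum_filter]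
  refine sum_congr rfl fun H hH => ?_
  rw [hσ.alphaClass_apply hH]
  split_ifs <;> ring

theorem IsConsecutive.deg_betaClass_cons (h : IsConsecutive σ ∅ G) (hσ : M.IsFlag σ)
    (hcard : #σ + vs.length + 1 = M.rk univ + 1) (hi : i ∈ G) :
    M.bergmanFan.deg (betaClass :: vs) σ =
      ∑ H ∈ linkOf M.IsFlag σ with i ∉ H, M.bergmanFan.deg vs (insert H σ) := by
  obtain ⟨hl, heq⟩ := h.mem_modularFunctions_and_eqOn_betaClass hi
  rw [M.bergmanFan.deg_cons_of_eqOn hσ hcard hl heq, sum_filter]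
  refine sum_congr rfl fun H hH => ?_
  rw [hσ.betaClass_apply hH]
  split_ifs <;> ring

/-! ### The mixed degrees of `α` and `β` -/

theorem IsConsecutive.deg_replicate_alphaClass_append_eq_zero (h : IsConsecutive σ T univ)
    (hσ : M.IsFlag σ) (hcard : #σ + m + vs.length = M.rk univ + 1)
    (hT : M.rk univ < M.rk T + m + 1) :
    M.bergmanFan.deg (List.replicate m alphaClass ++ vs) σ = 0 := by
  induction m generalizing σ T with
  | zero => exact absurd ((hσ.isFlat h.left_mem).rk_lt_rk h.ssubset) (by omega)
  | succ m ih =>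
    obtain ⟨i, -, hi⟩ := exists_of_ssubset h.ssubset
    rw [List.replicate_succ, List.cons_append, h.deg_alphaClass_cons hσ (by simp; omega) hi]
    refine sum_eq_zero fun H hH => ?_
    obtain ⟨hH, hiH⟩ := mem_filter.1 hH
    have hTH := hσ.ssuperset_of_mem_of_notMem hH h.left_mem hiH hi
    have hrk := (hσ.isFlat h.left_mem).rk_lt_rk hTH
    obtain ⟨hHσ, hins⟩ := mem_linkOf.1 hH
    exact ih (h.insert_right hTH (hσ.ssubset_univ hH)) hins
      (by rw [card_insert_of_notMem hHσ]; omega) (by omega)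

theorem IsConsecutive.deg_replicate_alphaClass (h : IsConsecutive σ T univ) (hσ : M.IsFlag σ)
    (hcard : #σ + m = M.rk univ + 1) (hT : M.rk T + m + 1 = M.rk univ) :
    M.bergmanFan.deg (List.replicate m alphaClass) σ = 1 := by
  induction m generalizing σ T with
  | zero => rfl
  | succ m ih =>
    obtain ⟨i, -, hi⟩ := exists_of_ssubset h.ssubset
    have hTflat := hσ.isFlat h.left_mem
    have hrk := hTflat.rk_closure_insert hi
    have hiL := M.mem_closure_insert i T
    have hL : M.closure (insert i T) ∈ linkOf M.IsFlag σ :=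
      (h.mem_link_iff hσ (by omega) (by omega)).2
        ⟨M.isFlat_closure _, M.subset_closure_insert i T, subset_univ _⟩
    have insert_right : ∀ H ∈ linkOf M.IsFlag σ, i ∈ H → T ⊂ H ∧
        IsConsecutive (insert H σ) H univ ∧ M.IsFlag (insert H σ) ∧
          #(insert H σ) + m = M.rk univ + 1 := fun H hH hiH =>
      have hTH := hσ.ssuperset_of_mem_of_notMem hH h.left_mem hiH hi
      ⟨hTH, h.insert_right hTH (hσ.ssubset_univ hH), (mem_linkOf.1 hH).2,
        by rw [card_insert_of_notMem (mem_linkOf.1 hH).1]; omega⟩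
    rw [List.replicate_succ, h.deg_alphaClass_cons hσ (by simp; omega) hi,
      sum_eq_single_of_mem _ (mem_filter.2 ⟨hL, hiL⟩)]
    · obtain ⟨-, hcons, hins, hcard'⟩ := insert_right _ hL hiL
      exact ih hcons hins hcard' (by omega)
    · intro H hH hne
      obtain ⟨hH, hiH⟩ := mem_filter.1 hH
      obtain ⟨hTH, hcons, hins, hcard'⟩ := insert_right H hH hiH
      have hlt := hTflat.rk_lt_rk hTH
      have hne' : M.rk H ≠ M.rk T + 1 := fun hr => hne
        (hTflat.closure_insert_eq hi (hσ.mem_link.1 hH).2.1 hTH.1 hiH hr).symm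
      simpa using hcons.deg_replicate_alphaClass_append_eq_zero hins (vs := []) (m := m)
        (by simpa using hcard') (by omega)

theorem IsConsecutive.deg_replicate_betaClass_append_eq_zero (h : IsConsecutive σ ∅ G)
    (hσ : M.IsFlag σ) (hcard : #σ + k + vs.length = M.rk univ + 1) (hG : M.rk G ≤ k) :
    M.bergmanFan.deg (List.replicate k betaClass ++ vs) σ = 0 := by
  induction k generalizing σ G with
  | zero => exact absurd (M.isFlat_empty.rk_lt_rk h.ssubset) (by omega)
  | succ k ih =>
    obtain ⟨i, hi, -⟩ := exists_of_ssubset h.ssubset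
    rw [List.replicate_succ, List.cons_append, h.deg_betaClass_cons hσ (by simp; omega) hi]
    refine sum_eq_zero fun H hH => ?_
    obtain ⟨hH, hiH⟩ := mem_filter.1 hH
    obtain ⟨hHσ, hins⟩ := mem_linkOf.1 hH
    have hHG := hσ.ssubset_of_mem_of_notMem hH h.right_mem hi hiH
    have hrk := (hσ.mem_link.1 hH).2.1.rk_lt_rk hHG
    exact ih (h.insert_left (hσ.empty_ssubset hH) hHG) hins
      (by rw [card_insert_of_notMem hHσ]; omega) (by omega)

theorem IsFlat.absMobius_eq_one (hG : M.IsFlat G) (hr : M.rk G = 1) : M.absMobius G = 1 := by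
  obtain ⟨i, hi⟩ : G.Nonempty := nonempty_iff_ne_empty.2 fun h => by simp [h, M.rk_empty] at hr
  have hbelow : M.coversBelow i G = {∅} := by
    ext H
    rw [mem_coversBelow, mem_singleton]
    refine ⟨fun h => eq_empty_of_rk_eq_zero (Nat.succ_injective (h.2.2.2.trans hr)), ?_⟩
    rintro rfl
    exact ⟨M.isFlat_empty, empty_subset G, notMem_empty i, by rw [M.rk_empty, hr]⟩
  rw [hG.absMobius_eq_sum hi, hbelow, sum_singleton, absMobius_empty]

theorem IsConsecutive.coversBelow_subset_link (h : IsConsecutive σ ∅ G) (hσ : M.IsFlag σ)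
    (hG : 1 < M.rk G) : M.coversBelow i G ⊆ (linkOf M.IsFlag σ).filter (i ∉ ·) := by
  intro H hH
  obtain ⟨hHflat, hHG, hiH, hr⟩ := mem_coversBelow.1 hH
  rw [mem_filter, h.mem_link_iff hσ (by rw [M.rk_empty]; omega) (by omega)]
  exact ⟨⟨hHflat, empty_subset H, hHG⟩, hiH⟩

/-- Expanding `β` reproduces Weisner's recursion for the Möbius function. -/
theorem IsConsecutive.deg_replicate_betaClass_append (hG : IsConsecutive σ ∅ G)
    (hT : IsConsecutive σ T univ) (hGT : G ⊆ T) (hσ : M.IsFlag σ)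
    (hcard : #σ + k + m = M.rk univ + 1) (hGk : M.rk G = k + 1) (hTm : M.rk T + m + 1 = M.rk univ) :
    M.bergmanFan.deg (List.replicate k betaClass ++ List.replicate m alphaClass) σ =
      M.absMobius G := by
  have hGflat := hσ.isFlat hG.right_mem
  induction k generalizing σ G with
  | zero =>
    rw [List.replicate_zero, List.nil_append, hT.deg_replicate_alphaClass hσ (by omega) hTm,
      hGflat.absMobius_eq_one hGk, Int.cast_one]
  | succ k ih =>
    obtain ⟨i, hi, -⟩ := exists_of_ssubset hG.ssubset
    have hsub := hG.coversBelow_subset_link (i := i) hσ (by omega)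
    rw [List.replicate_succ, List.cons_append, hG.deg_betaClass_cons hσ (by simp; omega) hi,
      hGflat.absMobius_eq_sum hi, Int.cast_sum, ← sum_subset hsub]
    · refine sum_congr rfl fun H hH => ?_
      obtain ⟨hHflat, -, hiH, hr⟩ := mem_coversBelow.1 hH
      have hH := (mem_filter.1 (hsub hH)).1
      obtain ⟨hHσ, hins⟩ := mem_linkOf.1 hH
      have hHG := hσ.ssubset_of_mem_of_notMem hH hG.right_mem hi hiH
      have hHT := hHG.1.trans hGT
      exact ih (hG.insert_left (hσ.empty_ssubset hH) hHG) (hT.insert_of_subset_left hHT) hHT hins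
        (by rw [card_insert_of_notMem hHσ]; omega) (by omega) hHflat
    · intro H hH hHbelow
      obtain ⟨hH, hiH⟩ := mem_filter.1 hH
      obtain ⟨hHσ, hins⟩ := mem_linkOf.1 hH
      have hHflat := (hσ.mem_link.1 hH).2.1
      have hHG := hσ.ssubset_of_mem_of_notMem hH hG.right_mem hi hiH
      have hlt := hHflat.rk_lt_rk hHG
      have hne : M.rk H + 1 ≠ M.rk G := fun hr => hHbelow <|
        mem_coversBelow.2 ⟨hHflat, hHG.1, hiH, hr⟩
      exact (hG.insert_left (hσ.empty_ssubset hH) hHG).deg_replicate_betaClass_append_eq_zero hins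
        (by rw [card_insert_of_notMem hHσ, List.length_replicate]; omega) (by omega)

/-! ### Reduced Whitney numbers -/

variable (M)

/-- The absolute value of the `k`-th coefficient of the reduced characteristic polynomial: the sum
of `|μ(∅, H)|` over the flats `H` of rank `k` avoiding `p`. -/
def reducedWhitney (p : α) (k : ℕ) : ℤ :=
  ∑ H with M.IsFlat H ∧ p ∉ H ∧ M.rk H = k, M.absMobius H

theorem reducedWhitney_pos (p : α) (hk : k < M.rk univ) : 0 < M.reducedWhitney p k := by
  refine sum_pos (fun H hH => (mem_filter.1 hH).2.1.absMobius_pos) ?_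
  obtain ⟨H, hH, -, -, hp, hr⟩ := M.isFlat_empty.exists_notMem_of_rk_eq M.isFlat_univ
    (empty_subset univ) (mem_univ p) (notMem_empty p) (M.rk_empty ▸ k.zero_le) hk
  exact ⟨H, by simp [hH, hp, hr]⟩

theorem reducedWhitney_eq_sum (p : α) (k : ℕ) :
    M.reducedWhitney p k = (-1) ^ k * ∑ X with p ∉ M.closure X ∧ M.rk X = k, (-1) ^ #X := by
  rw [reducedWhitney, ← sum_fiberwise_of_maps_to (g := M.closure)
    (s := univ.filter fun X => p ∉ M.closure X ∧ M.rk X = k)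
    (t := univ.filter fun H => M.IsFlat H ∧ p ∉ H ∧ M.rk H = k), mul_sum]
  · refine sum_congr rfl fun H hH => ?_
    obtain ⟨-, hp, hr⟩ := (mem_filter.1 hH).2
    rw [absMobius, hr, filter_filter]
    congr 2
    refine filter_congr fun X _ => ⟨?_, And.right⟩
    rintro rfl
    exact ⟨⟨hp, M.rk_closure X ▸ hr⟩, rfl⟩
  · intro X hX
    obtain ⟨hp, hr⟩ := (mem_filter.1 hX).2
    exact mem_filter.2 ⟨mem_univ _, M.isFlat_closure X, hp, (M.rk_closure X).trans hr⟩

theorem reducedWhitney_zero (p : α) : M.reducedWhitney p 0 = 1 := by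
  have hfilter : (univ.filter fun H => M.IsFlat H ∧ p ∉ H ∧ M.rk H = 0) = {∅} := by
    ext H
    simp only [mem_filter, mem_univ, true_and, mem_singleton]
    refine ⟨fun h => eq_empty_of_rk_eq_zero h.2.2, ?_⟩
    rintro rfl
    exact ⟨M.isFlat_empty, notMem_empty p, M.rk_empty⟩
  rw [reducedWhitney, hfilter, sum_singleton, absMobius_empty]

theorem isFlag_pair : M.IsFlag {∅, univ} where
  isFlat := by simp [M.isFlat_empty, M.isFlat_univ]
  isChain := by simpa using (IsChain.singleton (a := univ)).insert (by simp)
  empty_mem := by simp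
  univ_mem := by simp

theorem isConsecutive_pair [Nonempty α] : IsConsecutive {∅, univ} (∅ : Finset α) univ where
  left_mem := by simp
  right_mem := by simp
  ssubset := univ_nonempty.empty_ssubset
  subset_or_subset := by simp

theorem card_pair_empty_univ [Nonempty α] : #({∅, univ} : Finset (Finset α)) = 2 :=
  card_pair univ_nonempty.ne_empty.symm

variable {M} in
theorem deg_replicate_betaClass_append_insert (hH : H ∈ linkOf M.IsFlag {∅, univ})
    (hkm : k + 1 + m + 1 = M.rk univ) :
    M.bergmanFan.deg (List.replicate k betaClass ++ List.replicate m alphaClass)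
      (insert H {∅, univ}) = if M.rk H = k + 1 then (M.absMobius H : ℝ) else 0 := by
  obtain ⟨hHpair, hins⟩ := mem_linkOf.1 hH
  have hH0 := M.isFlag_pair.empty_ssubset hH
  have hHu := M.isFlag_pair.ssubset_univ hH
  have : Nonempty α := (exists_of_ssubset hHu).nonempty
  have hcard : #(insert H {∅, univ} : Finset (Finset α)) = 3 := by
    rw [card_insert_of_notMem hHpair, card_pair_empty_univ]
  have hbot := (isConsecutive_pair (α := α)).insert_left hH0 hHu
  have htop := (isConsecutive_pair (α := α)).insert_right hH0 hHu
  rcases lt_trichotomy (M.rk H) (k + 1) with hr | hr | hr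
  · rw [if_neg hr.ne, hbot.deg_replicate_betaClass_append_eq_zero hins
      (by rw [hcard, List.length_replicate]; omega) (by omega)]
  · rw [if_pos hr, hbot.deg_replicate_betaClass_append htop Subset.rfl hins (by omega) hr
      (by omega)]
  · rw [if_neg hr.ne', M.bergmanFan.deg_perm List.perm_append_comm hins
      (by rw [hcard]; simp [bergmanFan]; omega), htop.deg_replicate_alphaClass_append_eq_zero hins
      (by rw [hcard, List.length_replicate]; omega) (by omega)]

/-- The reduced Whitney numbers are the mixed degrees of `α` and `β`. -/
theorem deg_replicate_betaClass_append_eq_reducedWhitney (p : α) (hkm : k + m + 1 = M.rk univ) :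
    M.bergmanFan.deg (List.replicate k betaClass ++ List.replicate m alphaClass) {∅, univ} =
      M.reducedWhitney p k := by
  have : Nonempty α := ⟨p⟩
  have hcard := card_pair_empty_univ (α := α)
  have hpair := M.isFlag_pair
  cases k with
  | zero =>
    rw [List.replicate_zero, List.nil_append, isConsecutive_pair.deg_replicate_alphaClass hpair
      (by omega) (by rw [M.rk_empty]; omega), reducedWhitney_zero, Int.cast_one]
  | succ k =>
    rw [List.replicate_succ, List.cons_append, isConsecutive_pair.deg_betaClass_cons hpair
      (by simp [hcard]; omega) (mem_univ p), sum_congr rfl fun H hH =>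
        deg_replicate_betaClass_append_insert (mem_filter.1 hH).1 hkm, ← sum_filter,
      reducedWhitney, Int.cast_sum]
    refine sum_congr ?_ fun _ _ => rfl
    ext H
    simp only [mem_filter, mem_univ, true_and]
    by_cases hr : M.rk H = k + 1
    · simp [hr, isConsecutive_pair.mem_link_iff hpair (by rw [M.rk_empty]; omega : _ < M.rk H)
        (by omega)]
    · simp [hr]

/-- The Hodge–Riemann relation for `α` and `β`. -/
theorem reducedWhitney_mul_le_sq (p : α) (hk : k + 2 < M.rk univ) :
    M.reducedWhitney p k * M.reducedWhitney p (k + 2) ≤ M.reducedWhitney p (k + 1) ^ 2 := by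
  have : Nonempty α := ⟨p⟩
  obtain ⟨m, hm⟩ : ∃ m, k + 2 + m + 1 = M.rk univ := ⟨M.rk univ - (k + 3), by omega⟩
  have hdim : M.bergmanFan.dim = M.rk univ + 1 := rfl
  have hcard := card_pair_empty_univ (α := α)
  set vs : List (Finset α → ℝ) := List.replicate k betaClass ++ List.replicate m alphaClass
    with hvs
  have hnef : ∀ v ∈ vs, M.bergmanFan.IsNef v := fun v hv => by
    rcases List.mem_append.1 hv with hv | hv <;> rw [List.eq_of_mem_replicate hv]
    exacts [M.isNef_betaClass, M.isNef_alphaClass]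
  have key := M.bergmanFan.mul_deg_le_sq_deg (fun _ => isLorentzian_degForm_nil)
    M.isAmple_neg_sq_card hnef M.isFlag_pair (by simp [hvs, hcard, hdim]; omega) betaClass
    M.isNef_alphaClass
  have hperm : (List.replicate k betaClass ++ List.replicate (m + 1) alphaClass).Perm
      (alphaClass :: vs) := List.perm_middle
  have hperm₂ : (List.replicate k betaClass ++ List.replicate (m + 2) alphaClass).Perm
      (alphaClass :: alphaClass :: vs) := List.perm_middle.trans (hperm.cons _)
  have hperm₁ : (List.replicate (k + 1) betaClass ++ List.replicate (m + 1) alphaClass).Perm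
      (betaClass :: alphaClass :: vs) := hperm.cons _
  rw [mul_comm]
  exact_mod_cast show (M.reducedWhitney p (k + 2) * M.reducedWhitney p k : ℝ) ≤
      M.reducedWhitney p (k + 1) ^ 2 by
    rwa [← M.deg_replicate_betaClass_append_eq_reducedWhitney p hm,
      ← M.deg_replicate_betaClass_append_eq_reducedWhitney p (k := k) (m := m + 2) (by omega),
      ← M.deg_replicate_betaClass_append_eq_reducedWhitney p (k := k + 1) (m := m + 1) (by omega),
      M.bergmanFan.deg_perm hperm₂ M.isFlag_pair (by simp [hcard, hdim]; omega),
      M.bergmanFan.deg_perm hperm₁ M.isFlag_pair (by simp [hcard, hdim]; omega)]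

end LooplessRankFunction

end LogConcavity

section Cone

open Finset

namespace Semimatroid

variable {E : Type*} [DecidableEq E]

theorem eraseNone_insert_some (e : E) (A : Finset (Option E)) :
    eraseNone (insert (some e) A) = insert e (eraseNone A) := by
  ext
  simp

theorem eraseNone_insert_none (A : Finset (Option E)) :
    eraseNone (insert none A) = eraseNone A := by
  ext
  simp

variable [Fintype E] (S : Semimatroid E) {X Y : Finset E} {e f : E}

theorem empty_mem : ∅ ∈ S.C :=
  let ⟨X, hX⟩ := S.C_nonempty
  S.mem_of_subset hX (empty_subset X)

theorem r_empty : S.r ∅ = 0 :=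
  Nat.le_zero.1 (S.r_le_card S.empty_mem)

/-- The largest rank of a central subset of `Y`, which extends the rank function of the
semimatroid to all subsets of the ground set. -/
def rankOn (Y : Finset E) : ℕ := (S.C.filter (· ⊆ Y)).sup S.r

variable {S}

theorem r_le_rankOn (hX : X ∈ S.C) (hXY : X ⊆ Y) : S.r X ≤ S.rankOn Y :=
  le_sup (f := S.r) (mem_filter.2 ⟨hX, hXY⟩)

theorem rankOn_le {n : ℕ} (h : ∀ X ∈ S.C, X ⊆ Y → S.r X ≤ n) : S.rankOn Y ≤ n :=
  Finset.sup_le fun X hX => h X (mem_filter.1 hX).1 (mem_filter.1 hX).2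

theorem rankOn_of_mem (hY : Y ∈ S.C) : S.rankOn Y = S.r Y :=
  (rankOn_le fun _ hX hXY => S.r_mono hX hY hXY).antisymm (r_le_rankOn hY Subset.rfl)

theorem rankOn_eq_of_forall_insert_notMem (hX : X ∈ S.C) (hXY : X ⊆ Y)
    (hmax : ∀ e ∈ Y, e ∉ X → insert e X ∉ S.C) : S.rankOn Y = S.r X := by
  refine (rankOn_le fun Z hZ hZY => ?_).antisymm (r_le_rankOn hX hXY)
  by_contra! hlt
  obtain ⟨e, he, heC⟩ := S.augment hX hZ hlt
  obtain ⟨heZ, heX⟩ := mem_sdiff.1 he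
  exact hmax e (hZY heZ) heX heC

theorem exists_mem_r_eq_rankOn (hX : X ∈ S.C) (hXY : X ⊆ Y) :
    ∃ Z ∈ S.C, X ⊆ Z ∧ Z ⊆ Y ∧ S.r Z = S.rankOn Y := by
  obtain ⟨Z, hXZ, hmax⟩ := (S.C.filter (· ⊆ Y)).exists_le_maximal (mem_filter.2 ⟨hX, hXY⟩)
  obtain ⟨hZ, hZY⟩ := mem_filter.1 hmax.prop
  refine ⟨Z, hZ, hXZ, hZY, (rankOn_eq_of_forall_insert_notMem hZ hZY fun e heY heZ he => ?_).symm⟩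
  exact heZ (insert_subset_iff.1
    (hmax.le_of_ge (mem_filter.2 ⟨he, insert_subset heY hZY⟩) (subset_insert e Z))).1

theorem rankOn_insert_of_notMem (hY : Y ∈ S.C) (he : insert e Y ∉ S.C) :
    S.rankOn (insert e Y) = S.rankOn Y := by
  rw [rankOn_of_mem hY]
  refine rankOn_eq_of_forall_insert_notMem hY (subset_insert e Y) fun f hf hfY => ?_
  obtain rfl := (mem_insert.1 hf).resolve_right hfY
  exact he

theorem insert_insert_mem (hY : Y ∈ S.C) (he : insert e Y ∈ S.C) (hf : insert f Y ∈ S.C)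
    (hr : S.r (insert e Y) = S.r Y) : insert e (insert f Y) ∈ S.C := by
  have hI : insert e Y ∩ insert f Y ∈ S.C := S.mem_of_subset he inter_subset_left
  have hYI := S.r_mono hY hI (subset_inter (subset_insert e Y) (subset_insert f Y))
  have hIe := S.r_mono hI he inter_subset_left
  have hU := S.union_mem he hf (by omega)
  rwa [insert_union, union_insert, union_self] at hU

variable (S)

theorem rankOn_mono : Monotone S.rankOn := fun _ _ h =>
  rankOn_le fun _ hX hXY => r_le_rankOn hX (hXY.trans h)

theorem rankOn_univ : S.rankOn univ = S.rank := by
  simp [rankOn, rank]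

theorem rankOn_insert_le (e : E) (Y : Finset E) : S.rankOn (insert e Y) ≤ S.rankOn Y + 1 := by
  refine rankOn_le fun X hX hXY => ?_
  have hXe : X.erase e ∈ S.C := S.mem_of_subset hX (erase_subset e X)
  have hle := r_le_rankOn hXe (subset_insert_iff.1 hXY)
  by_cases he : e ∈ X
  · have heC : {e} ∈ S.C := S.mem_of_subset hX (singleton_subset_iff.2 he)
    have hunion : X.erase e ∪ {e} = X := by rw [union_comm, ← insert_eq, insert_erase he]
    have hsub := S.submodular hXe heC (hunion.symm ▸ hX)
    have hcard := S.r_le_card heC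
    rw [hunion] at hsub
    rw [card_singleton] at hcard
    omega
  · rw [erase_eq_of_notMem he] at hle
    omega

theorem rankOn_insert_insert (e f : E) (Y : Finset E) (he : S.rankOn (insert e Y) = S.rankOn Y)
    (hf : S.rankOn (insert f Y) = S.rankOn Y) :
    S.rankOn (insert e (insert f Y)) = S.rankOn Y := by
  by_cases heY : e ∈ Y
  · rw [insert_eq_of_mem (mem_insert_of_mem heY), hf]
  by_cases hfY : f ∈ Y
  · rw [insert_eq_of_mem hfY, he]
  by_cases hef : e = f
  · rw [hef, insert_idem, hf]
  have hY : Y ⊆ insert e (insert f Y) := (subset_insert f Y).trans (subset_insert e _)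
  obtain ⟨X, hX, -, hXY, hrX⟩ := exists_mem_r_eq_rankOn S.empty_mem (empty_subset Y)
  obtain ⟨Z, hZ, hXZ, hZY, hrZ⟩ := exists_mem_r_eq_rankOn hX (hXY.trans hY)
  refine le_antisymm ?_ (S.rankOn_mono hY)
  have hZe : Z.erase e ∈ S.C := S.mem_of_subset hZ (erase_subset e Z)
  have hZf : Z.erase f ∈ S.C := S.mem_of_subset hZ (erase_subset f Z)
  have hle_e := r_le_rankOn hZf (Y := insert e Y)
    (subset_insert_iff.1 (insert_comm e f Y ▸ hZY))
  have hle_f := r_le_rankOn hZe (subset_insert_iff.1 hZY)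
  have hunion : Z.erase e ∪ Z.erase f = Z := by
    grind
  have hXinter : X ⊆ Z.erase e ∩ Z.erase f := subset_inter
    (subset_erase.2 ⟨hXZ, fun h => heY (hXY h)⟩) (subset_erase.2 ⟨hXZ, fun h => hfY (hXY h)⟩)
  have hrinter := S.r_mono hX (S.mem_of_subset hZe inter_subset_left) hXinter
  have hsub := S.submodular hZe hZf (hunion.symm ▸ hZ)
  rw [hunion] at hsub
  omega

/-! ### The cone of a semimatroid -/

/-- The sets that are central in the semimatroid, as subsets of the ground set of its cone, whose
apex is `none`. -/
def IsCentral (A : Finset (Option E)) : Prop := none ∉ A ∧ eraseNone A ∈ S.C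

instance : DecidablePred S.IsCentral := fun _ => inferInstanceAs (Decidable (_ ∧ _))

/-- The rank function of the cone. -/
def coneRank (A : Finset (Option E)) : ℕ :=
  S.rankOn (eraseNone A) + if S.IsCentral A then 0 else 1

variable {S} {A B : Finset (Option E)}

theorem IsCentral.mono (hB : S.IsCentral B) (h : A ⊆ B) : S.IsCentral A :=
  ⟨fun hn => hB.1 (h hn), S.mem_of_subset hB.2 (eraseNone.monotone h)⟩

theorem not_isCentral_insert_none (A : Finset (Option E)) : ¬S.IsCentral (insert none A) :=
  fun h => h.1 (mem_insert_self none A)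

theorem isCentral_insert_some :
    S.IsCentral (insert (some e) A) ↔ none ∉ A ∧ insert e (eraseNone A) ∈ S.C := by
  simp [IsCentral, eraseNone_insert_some]

theorem coneRank_of_isCentral (hA : S.IsCentral A) : S.coneRank A = S.r (eraseNone A) := by
  rw [coneRank, if_pos hA, rankOn_of_mem hA.2, add_zero]

theorem coneRank_of_not_isCentral (hA : ¬S.IsCentral A) :
    S.coneRank A = S.rankOn (eraseNone A) + 1 := by
  rw [coneRank, if_neg hA]

theorem coneRank_eq_iff_of_subset (h : A ⊆ B) : S.coneRank B = S.coneRank A ↔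
    S.rankOn (eraseNone B) = S.rankOn (eraseNone A) ∧ (S.IsCentral A → S.IsCentral B) := by
  have hmono := S.rankOn_mono (eraseNone.monotone h)
  have hcentral := fun hB : S.IsCentral B => hB.mono h
  rw [coneRank, coneRank]
  split_ifs <;> simp_all; omega

theorem IsCentral.insert_insert {e f : Option E} (he : S.IsCentral (insert e A))
    (hf : S.IsCentral (insert f A))
    (hr : S.rankOn (eraseNone (insert e A)) = S.rankOn (eraseNone A)) :
    S.IsCentral (insert e (insert f A)) := by
  have hA := hf.mono (subset_insert f A)
  cases e with
  | none => exact absurd he (not_isCentral_insert_none A)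
  | some e =>
    cases f with
    | none => exact absurd hf (not_isCentral_insert_none A)
    | some f =>
      have heC := (isCentral_insert_some.1 he).2
      rw [eraseNone_insert_some, rankOn_of_mem heC, rankOn_of_mem hA.2] at hr
      rw [isCentral_insert_some, eraseNone_insert_some]
      exact ⟨hf.1, insert_insert_mem hA.2 heC (isCentral_insert_some.1 hf).2 hr⟩

variable (S)

theorem rankOn_eraseNone_insert_insert (e f : Option E) (A : Finset (Option E))
    (he : S.rankOn (eraseNone (insert e A)) = S.rankOn (eraseNone A))
    (hf : S.rankOn (eraseNone (insert f A)) = S.rankOn (eraseNone A)) :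
    S.rankOn (eraseNone (insert e (insert f A))) = S.rankOn (eraseNone A) := by
  cases e with
  | none => rw [eraseNone_insert_none, hf]
  | some e =>
    cases f with
    | none => rwa [eraseNone_insert_some, eraseNone_insert_none, ← eraseNone_insert_some]
    | some f =>
      simp only [eraseNone_insert_some] at he hf ⊢
      exact S.rankOn_insert_insert e f _ he hf

theorem coneRank_mono : Monotone S.coneRank := fun A B h => by
  have hmono := S.rankOn_mono (eraseNone.monotone h)
  have hcentral := fun hB : S.IsCentral B => hB.mono h
  rw [coneRank, coneRank]
  split_ifs <;> first | omega | tauto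

theorem coneRank_insert_le (e : Option E) (A : Finset (Option E)) :
    S.coneRank (insert e A) ≤ S.coneRank A + 1 := by
  cases e with
  | none =>
    rw [coneRank_of_not_isCentral (not_isCentral_insert_none A), eraseNone_insert_none, coneRank]
    omega
  | some e =>
    have hle := S.rankOn_insert_le e (eraseNone A)
    rw [coneRank, coneRank, eraseNone_insert_some]
    split_ifs with hins hA hA
    · exact hle
    · omega
    · rw [rankOn_insert_of_notMem hA.2 fun he => hins (isCentral_insert_some.2 ⟨hA.1, he⟩)]
    · omega

theorem coneRank_insert_insert (e f : Option E) (A : Finset (Option E))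
    (he : S.coneRank (insert e A) = S.coneRank A) (hf : S.coneRank (insert f A) = S.coneRank A) :
    S.coneRank (insert e (insert f A)) = S.coneRank A := by
  obtain ⟨her, hec⟩ := (coneRank_eq_iff_of_subset (subset_insert e A)).1 he
  obtain ⟨hfr, hfc⟩ := (coneRank_eq_iff_of_subset (subset_insert f A)).1 hf
  exact (coneRank_eq_iff_of_subset ((subset_insert f A).trans (subset_insert e _))).2
    ⟨S.rankOn_eraseNone_insert_insert e f A her hfr, fun hA => (hec hA).insert_insert (hfc hA) her⟩

theorem isCentral_empty : S.IsCentral ∅ := ⟨notMem_empty _, eraseNone_empty (α := E) ▸ S.empty_mem⟩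

theorem coneRank_empty : S.coneRank ∅ = 0 := by
  rw [coneRank_of_isCentral S.isCentral_empty, eraseNone_empty, r_empty]

theorem coneRank_univ : S.coneRank univ = S.rank + 1 := by
  have hnot : ¬S.IsCentral univ := fun h => h.1 (mem_univ none)
  have huniv : eraseNone (univ : Finset (Option E)) = univ := by ext; simp
  rw [coneRank_of_not_isCentral hnot, huniv, rankOn_univ]

variable {S}

theorem coneRank_singleton (hS : ∀ e, {e} ∈ S.C → S.r {e} ≠ 0) (e : Option E) :
    S.coneRank {e} = 1 := by
  have hle := S.coneRank_insert_le e ∅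
  rw [coneRank_empty, LawfulSingleton.insert_empty_eq] at hle
  refine hle.antisymm (Nat.one_le_iff_ne_zero.2 fun h0 => ?_)
  have hcentral : S.IsCentral {e} := by
    by_contra h
    rw [coneRank_of_not_isCentral h] at h0
    omega
  rw [coneRank_of_isCentral hcentral] at h0
  cases e with
  | none => exact hcentral.1 (mem_singleton_self none)
  | some e =>
    have he : eraseNone {some e} = {e} := by ext; simp
    exact hS e (he ▸ hcentral.2) (he ▸ h0)

/-- The cone of a loopless semimatroid: a matroid on the ground set with an apex `none` added, in
which the central sets are those whose closure avoids the apex. -/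
def cone (hS : ∀ e, {e} ∈ S.C → S.r {e} ≠ 0) : LooplessRankFunction (Option E) where
  rk := S.coneRank
  rk_empty := S.coneRank_empty
  rk_mono := S.coneRank_mono
  rk_insert_le := S.coneRank_insert_le
  rk_insert_insert := S.coneRank_insert_insert
  rk_singleton := coneRank_singleton hS

variable (hS : ∀ e, {e} ∈ S.C → S.r {e} ≠ 0)

theorem cone_rk_univ : (cone hS).rk univ = S.rank + 1 := S.coneRank_univ

theorem none_notMem_closure_cone : none ∉ (cone hS).closure A ↔ S.IsCentral A := by
  rw [LooplessRankFunction.mem_closure]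
  refine (coneRank_eq_iff_of_subset (subset_insert none A)).not.trans ?_
  simp [eraseNone_insert_none, not_isCentral_insert_none]

variable (S) in
theorem whitney_eq_sum {k : ℕ} (hk : k ≤ S.rank) :
    S.whitney k = (-1) ^ k * ∑ X ∈ S.C with S.r X = k, (-1) ^ #X := by
  rw [whitney, charPoly, Polynomial.finsetSum_coeff, sum_filter]
  congr 1
  refine sum_congr rfl fun X hX => ?_
  have hr : S.r X ≤ S.rank := le_sup hX
  have hiff : S.rank - k = S.rank - S.r X ↔ S.r X = k := by omega
  rw [show (-1 : Polynomial ℤ) ^ #X = Polynomial.C ((-1) ^ #X) by simp, Polynomial.coeff_C_mul,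
    Polynomial.coeff_X_pow]
  simp [hiff]

theorem whitney_eq_reducedWhitney_cone {k : ℕ} (hk : k ≤ S.rank) :
    S.whitney k = (cone hS).reducedWhitney none k := by
  rw [S.whitney_eq_sum hk, LooplessRankFunction.reducedWhitney_eq_sum]
  congr 1
  have rk_eq : ∀ A, S.IsCentral A → (cone hS).rk A = S.r (eraseNone A) := fun A hA =>
    coneRank_of_isCentral hA
  refine sum_nbij' (·.map .some) eraseNone (fun X hX => ?_) (fun A hA => ?_)
    (fun X _ => eraseNone_map_some X) (fun A hA => ?_) fun X _ => by rw [card_map]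
  · obtain ⟨hX, hr⟩ := mem_filter.1 hX
    have hcentral : S.IsCentral (X.map .some) := ⟨by simp, by rwa [eraseNone_map_some]⟩
    exact mem_filter.2 ⟨mem_univ _, (none_notMem_closure_cone hS).2 hcentral, by
      rw [rk_eq _ hcentral, eraseNone_map_some, hr]⟩
  · obtain ⟨-, hA, hr⟩ := mem_filter.1 hA
    rw [none_notMem_closure_cone] at hA
    exact mem_filter.2 ⟨hA.2, rk_eq A hA ▸ hr⟩
  · obtain ⟨-, hA, -⟩ := mem_filter.1 hA
    rw [map_some_eraseNone, erase_eq_of_notMem ((none_notMem_closure_cone hS).1 hA).1]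

theorem whitney_pos (hS : ∀ e, {e} ∈ S.C → S.r {e} ≠ 0) {k : ℕ} (hk : k ≤ S.rank) :
    0 < S.whitney k := by
  rw [whitney_eq_reducedWhitney_cone hS hk]
  exact (cone hS).reducedWhitney_pos none (by rw [cone_rk_univ]; omega)

theorem whitney_mul_le_sq (hS : ∀ e, {e} ∈ S.C → S.r {e} ≠ 0) {k : ℕ} (hk : k + 2 ≤ S.rank) :
    S.whitney k * S.whitney (k + 2) ≤ S.whitney (k + 1) ^ 2 := by
  rw [whitney_eq_reducedWhitney_cone hS hk, whitney_eq_reducedWhitney_cone hS (k := k) (by omega),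
    whitney_eq_reducedWhitney_cone hS (k := k + 1) (by omega)]
  exact (cone hS).reducedWhitney_mul_le_sq none (by rw [cone_rk_univ]; omega)

end Semimatroid

end Cone

/-- For a loopless semimatroid, the sequence `w_0(𝒞), …, w_{r(𝒞)}(𝒞)` of
unsigned Whitney numbers of the first kind is unimodal: for some `0 ≤ k ≤ r(𝒞)` it is
weakly increasing up to `k` and weakly decreasing from `k` on. -/
theorem Semimatroid.whitney_unimodal
    {E : Type*} [DecidableEq E] [Fintype E] (S : Semimatroid E)
    (hloopless : ¬ ∃ e : E, {e} ∈ S.C ∧ S.r {e} = 0) :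
    ∃ k ≤ S.rank,
      (∀ i j : ℕ, i ≤ j → j ≤ k → S.whitney i ≤ S.whitney j) ∧
      (∀ i j : ℕ, k ≤ i → i ≤ j → j ≤ S.rank → S.whitney j ≤ S.whitney i) := by
  have hS : ∀ e, {e} ∈ S.C → S.r {e} ≠ 0 := fun e he hr => hloopless ⟨e, he, hr⟩
  obtain ⟨k, hk, hmono, hanti⟩ := exists_monotoneOn_antitoneOn_of_mul_le_sq
    (fun _ hi => whitney_pos hS hi) (fun _ hi => whitney_mul_le_sq hS hi)
  exact ⟨k, hk, fun i j hij hjk => hmono (hij.trans hjk) hjk hij,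
    fun i j hki hij hj => hanti ⟨hki, hij.trans hj⟩ ⟨hki.trans hij, hj⟩ hij⟩
end

section
/- Let (E,𝒞,r) be a semimatroid, let r̂(X) = max{r(Y) : Y ⊆ X, Y ∈ 𝒞} for X ⊆ E, and let 𝒟 = {X ⊆ E : every circuit K of M_𝒞 with K ⊆ X belongs to 𝒞} (the α_𝒞-compatible subsets of the assigning matroid (M_𝒞, α_𝒞)). Then T(𝒞;t,s) = Σ_{X ∈ 𝒟} (t−1)^{r̂(E)−r̂(X)} (s−1)^{|X|−r̂(X)} and χ(𝒞;t) = Σ_{X ∈ 𝒟} (−1)^{|X|} t^{r̂(E)−r̂(X)}. -/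
open scoped Classical

namespace Semimatroid

variable {E : Type*} [DecidableEq E] [Fintype E] (S : Semimatroid E)

/-- The extension `r̂(X) = max{r(Y) : Y ⊆ X, Y ∈ 𝒞}` of the rank function to all of `2^E`;
it is the rank function of the matroid `M_𝒞`. -/
def rhat (X : Finset E) : ℕ := (S.C.filter fun Y => Y ⊆ X).sup S.r

/-- A circuit of the matroid `M_𝒞`: a minimal subset `K ⊆ E` with `r̂(K) < |K|`. -/
def IsMatCircuit (K : Finset E) : Prop :=
  S.rhat K < K.card ∧ ∀ K' ⊂ K, ¬ (S.rhat K' < K'.card)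

/-- The `α_𝒞`-compatible subsets of the assigning matroid `(M_𝒞, α_𝒞)`:
`𝒟 = {X ⊆ E : every circuit of M_𝒞 contained in X belongs to 𝒞}`. -/
noncomputable def compat : Finset (Finset E) :=
  (Finset.univ : Finset E).powerset.filter
    fun X => ∀ K : Finset E, S.IsMatCircuit K → K ⊆ X → K ∈ S.C

end Semimatroid

/-!
The point is that `𝒟 = 𝒞`. Subsets of central sets are central, so central sets are compatible.
Conversely, let `B` be a maximal independent subset of a compatible set `X`. For `e ∈ X \ B` the
dependent set `B ∪ {e}` contains a circuit `K`, which is central by compatibility. As `K \ {e} ⊆ B`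
has the same rank as `K`, axiom (SR4) makes `K ∪ B = B ∪ {e}` central, so `e ∈ cl B`. Hence
`X ⊆ cl B`, and adding the elements of `X` to `B` one by one, again by (SR4), shows that `X` is
central.
-/

namespace Semimatroid

variable {E : Type*} [DecidableEq E] [Fintype E] {S : Semimatroid E} {X Y Z B K : Finset E} {e : E}

lemma empty_mem_s9 (S : Semimatroid E) : ∅ ∈ S.C :=
  let ⟨_, hX⟩ := S.C_nonempty
  S.mem_of_subset hX (Finset.empty_subset _)

lemma r_le_rhat (hY : Y ∈ S.C) (hYX : Y ⊆ X) : S.r Y ≤ S.rhat X :=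
  Finset.le_sup (f := S.r) (Finset.mem_filter.2 ⟨hY, hYX⟩)

lemma exists_subset_r_eq_rhat (S : Semimatroid E) (X : Finset E) :
    ∃ Y ∈ S.C, Y ⊆ X ∧ S.r Y = S.rhat X := by
  obtain ⟨Y, hY, hr⟩ := Finset.exists_mem_eq_sup (S.C.filter (· ⊆ X))
    ⟨∅, Finset.mem_filter.2 ⟨S.empty_mem_s9, Finset.empty_subset X⟩⟩ S.r
  obtain ⟨hYC, hYX⟩ := Finset.mem_filter.1 hY
  exact ⟨Y, hYC, hYX, hr.symm⟩

lemma rhat_eq_r (hX : X ∈ S.C) : S.rhat X = S.r X := by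
  obtain ⟨Y, hY, hYX, hr⟩ := S.exists_subset_r_eq_rhat X
  exact (hr ▸ S.r_mono hY hX hYX).antisymm (r_le_rhat hX subset_rfl)

lemma rhat_univ (S : Semimatroid E) : S.rhat Finset.univ = S.rank := by
  simp [rank, rhat]

/-- The independent sets of the matroid `M_𝒞`, expressed through `𝒞` and `r` alone: the central
sets of full rank. In terms of `r̂` they are the sets `X` with `r̂(X) = |X|`, see
`rhat_lt_card_iff_not_isIndep`. -/
def IsIndep (S : Semimatroid E) (X : Finset E) : Prop :=
  X ∈ S.C ∧ S.r X = X.card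

lemma isIndep_empty (S : Semimatroid E) : S.IsIndep ∅ :=
  ⟨S.empty_mem_s9, Nat.le_zero.1 (S.r_le_card S.empty_mem_s9)⟩

lemma IsIndep.subset (hX : S.IsIndep X) (hYX : Y ⊆ X) : S.IsIndep Y := by
  have hY : Y ∈ S.C := S.mem_of_subset hX.1 hYX
  have hdiff : X \ Y ∈ S.C := S.mem_of_subset hX.1 Finset.sdiff_subset
  have hunion : Y ∪ X \ Y = X := Finset.union_sdiff_of_subset hYX
  refine ⟨hY, (S.r_le_card hY).antisymm ?_⟩
  have hsub : S.r X ≤ S.r Y + S.r (X \ Y) := by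
    have := S.submodular hY hdiff (hunion.symm ▸ hX.1)
    rw [hunion] at this
    omega
  have hrank := hX.2
  have hcard := Finset.card_sdiff_add_card_eq_card hYX
  have hrdiff := S.r_le_card hdiff
  omega

lemma rhat_lt_card_iff_not_isIndep : S.rhat X < X.card ↔ ¬ S.IsIndep X := by
  constructor
  · intro hlt hX
    exact hlt.ne ((rhat_eq_r hX.1).trans hX.2)
  · contrapose!
    intro hle
    obtain ⟨Y, hY, hYX, hr⟩ := S.exists_subset_r_eq_rhat X
    have hcard : X.card ≤ S.r Y := hr ▸ hle
    obtain rfl : Y = X := Finset.eq_of_subset_of_card_le hYX (hcard.trans (S.r_le_card hY))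
    exact ⟨hY, (S.r_le_card hY).antisymm hcard⟩

lemma isMatCircuit_iff_minimal : S.IsMatCircuit K ↔ Minimal (¬ S.IsIndep ·) K := by
  simp only [IsMatCircuit, rhat_lt_card_iff_not_isIndep, minimal_iff_forall_lt]

lemma IsMatCircuit.isIndep_erase (hK : S.IsMatCircuit K) (he : e ∈ K) :
    S.IsIndep (K.erase e) :=
  not_not.1 ((isMatCircuit_iff_minimal.1 hK).not_prop_of_lt (Finset.erase_ssubset he))

lemma exists_isMatCircuit_subset (hX : ¬ S.IsIndep X) : ∃ K ⊆ X, S.IsMatCircuit K := by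
  obtain ⟨K, hKX, hK⟩ := exists_minimal_le_of_wellFoundedLT (¬ S.IsIndep ·) X hX
  exact ⟨K, hKX, isMatCircuit_iff_minimal.2 hK⟩

lemma union_mem_of_r_le (hX : X ∈ S.C) (hY : Y ∈ S.C) (hZX : Z ⊆ X) (hZY : Z ⊆ Y)
    (hr : S.r X ≤ S.r Z) : X ∪ Y ∈ S.C := by
  have hinter : X ∩ Y ∈ S.C := S.mem_of_subset hX Finset.inter_subset_left
  have hZinter : Z ⊆ X ∩ Y := Finset.subset_inter hZX hZY
  refine S.union_mem hX hY (le_antisymm ?_ (S.r_mono hinter hX Finset.inter_subset_left))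
  exact hr.trans (S.r_mono (S.mem_of_subset hinter hZinter) hinter hZinter)

lemma mem_cl : e ∈ S.cl X ↔ insert e X ∈ S.C ∧ S.r (insert e X) = S.r X := by
  simp only [cl, Finset.mem_filter, Finset.mem_univ, true_and]

lemma union_mem_of_subset_cl (hX : X ∈ S.C) (hZ : Z ⊆ S.cl X) : X ∪ Z ∈ S.C := by
  induction Z using Finset.induction_on with
  | empty => rwa [Finset.union_empty]
  | insert e Z _ ih =>
    obtain ⟨he, hZ⟩ := Finset.insert_subset_iff.1 hZ
    obtain ⟨heX, hr⟩ := mem_cl.1 he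
    have hunion : insert e X ∪ (X ∪ Z) = X ∪ insert e Z := by
      rw [Finset.insert_union, ← Finset.union_assoc, Finset.union_self, Finset.union_insert]
    exact hunion ▸ union_mem_of_r_le heX (ih hZ) (Finset.subset_insert e X)
      Finset.subset_union_left hr.le

lemma IsIndep.mem_cl_of_not_isIndep_insert (hB : S.IsIndep B) (heB : insert e B ∈ S.C)
    (hdep : ¬ S.IsIndep (insert e B)) : e ∈ S.cl B := by
  have hlt : S.r (insert e B) < (insert e B).card :=
    (S.r_le_card heB).lt_of_ne fun h => hdep ⟨heB, h⟩
  have hle : S.r (insert e B) ≤ S.r B :=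
    hB.2 ▸ Nat.lt_succ_iff.1 (hlt.trans_le (Finset.card_insert_le e B))
  exact mem_cl.2 ⟨heB, hle.antisymm (S.r_mono hB.1 heB (Finset.subset_insert e B))⟩

lemma IsMatCircuit.r_le_r_erase (hK : S.IsMatCircuit K) (hKC : K ∈ S.C) (he : e ∈ K) :
    S.r K ≤ S.r (K.erase e) := by
  rw [(hK.isIndep_erase he).2, Finset.card_erase_of_mem he, ← rhat_eq_r hKC]
  exact Nat.le_sub_one_of_lt hK.1

lemma IsIndep.insert_mem_of_isMatCircuit (hB : S.IsIndep B) (hK : S.IsMatCircuit K)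
    (hKC : K ∈ S.C) (hKB : K ⊆ insert e B) : insert e B ∈ S.C := by
  have heK : e ∈ K := by
    by_contra heK
    have hKsub : K ⊆ B := (Finset.subset_insert_iff_of_notMem heK).1 hKB
    exact rhat_lt_card_iff_not_isIndep.1 hK.1 (hB.subset hKsub)
  have hunion : K ∪ B = insert e B :=
    (Finset.union_subset hKB (Finset.subset_insert e B)).antisymm
      (Finset.insert_subset (Finset.mem_union_left B heK) Finset.subset_union_right)
  exact hunion ▸ union_mem_of_r_le hKC hB.1 (Finset.erase_subset e K)
    (Finset.subset_insert_iff.1 hKB) (hK.r_le_r_erase hKC heK)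

lemma mem_compat : X ∈ S.compat ↔ ∀ K, S.IsMatCircuit K → K ⊆ X → K ∈ S.C := by
  simp only [compat, Finset.mem_filter, Finset.mem_powerset, Finset.subset_univ, true_and]

lemma subset_cl_of_maximal_isIndep (hX : X ∈ S.compat)
    (hB : Maximal (fun B => S.IsIndep B ∧ B ⊆ X) B) : X ⊆ S.cl B := by
  obtain ⟨hBind, hBX⟩ := hB.prop
  intro e heX
  by_cases heB : e ∈ B
  · simpa only [mem_cl, Finset.insert_eq_of_mem heB, and_true] using hBind.1
  have hsub : insert e B ⊆ X := Finset.insert_subset heX hBX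
  have hdep : ¬ S.IsIndep (insert e B) := fun h =>
    hB.not_prop_of_gt (Finset.ssubset_insert heB) ⟨h, hsub⟩
  obtain ⟨K, hKB, hK⟩ := exists_isMatCircuit_subset hdep
  have hKC : K ∈ S.C := mem_compat.1 hX K hK (hKB.trans hsub)
  exact hBind.mem_cl_of_not_isIndep_insert (hBind.insert_mem_of_isMatCircuit hK hKC hKB) hdep

lemma compat_eq_C (S : Semimatroid E) : S.compat = S.C := by
  refine Finset.Subset.antisymm (fun X hX => ?_) fun X hX =>
    mem_compat.2 fun K _ hKX => S.mem_of_subset hX hKX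
  obtain ⟨B, -, hB⟩ := exists_maximal_ge_of_wellFoundedGT (fun B => S.IsIndep B ∧ B ⊆ X) ∅
    ⟨S.isIndep_empty, Finset.empty_subset X⟩
  rw [← Finset.union_eq_right.2 hB.prop.2]
  exact union_mem_of_subset_cl hB.prop.1.1 (subset_cl_of_maximal_isIndep hX hB)

theorem tutte_charPoly_eq_compat_general (S : Semimatroid E) {M : Type*} [AddCommMonoid M]
    (f : ℕ → ℕ → ℕ → M) :
    ∑ A ∈ S.C, f S.rank (S.r A) A.card =
      ∑ X ∈ S.compat, f (S.rhat Finset.univ) (S.rhat X) X.card := by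
  rw [S.compat_eq_C, S.rhat_univ]
  exact Finset.sum_congr rfl fun A hA => by rw [rhat_eq_r hA]

end Semimatroid

/-- The Tutte and characteristic polynomials of a semimatroid `𝒞` coincide
with the compatible Tutte and characteristic polynomials of the assigning matroid
`(M_𝒞, α_𝒞)`, summed over the compatible sets `𝒟`. -/
theorem Semimatroid.tutte_charPoly_eq_compat
    {E : Type*} [DecidableEq E] [Fintype E] (S : Semimatroid E) :
    (∀ t s : ℤ,
      (∑ A ∈ S.C, (t - 1) ^ (S.rank - S.r A) * (s - 1) ^ (A.card - S.r A)) =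
      ∑ X ∈ S.compat,
        (t - 1) ^ (S.rhat Finset.univ - S.rhat X) * (s - 1) ^ (X.card - S.rhat X)) ∧
    S.charPoly =
      ∑ X ∈ S.compat,
        (-1 : Polynomial ℤ) ^ X.card * Polynomial.X ^ (S.rhat Finset.univ - S.rhat X) := by
  exact ⟨fun t s =>
      S.tutte_charPoly_eq_compat_general fun k m n => (t - 1) ^ (k - m) * (s - 1) ^ (n - m),
    S.tutte_charPoly_eq_compat_general fun k m n => (-1) ^ n * Polynomial.X ^ (k - m)⟩
end

section
/- Let (E,𝒞,r) be a semimatroid and X a flat of 𝒞. Then the map Y ↦ Y ∪ X is an order isomorphism from the poset ℒ(𝒞/X) of flats of the contraction 𝒞/X (ordered by inclusion) onto the poset {Z ∈ ℒ(𝒞) : X ⊆ Z} of flats of 𝒞 containing X (ordered by inclusion). -/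
open scoped Classical

namespace Semimatroid

variable {E : Type*} [DecidableEq E] [Fintype E] (S : Semimatroid E)

/-- `Y` is central in the contraction `𝒞/X`: `Y ⊆ E \ X` and `Y ∪ X ∈ 𝒞`. -/
def ContrCentral (X Y : Finset E) : Prop :=
  Y ⊆ Finset.univ \ X ∧ Y ∪ X ∈ S.C

/-- The rank function of the contraction `𝒞/X`: `Y ↦ r(Y ∪ X) − r(X)`. -/
def contrR (X Y : Finset E) : ℕ := S.r (Y ∪ X) - S.r X

/-- The closure operator of the contraction `𝒞/X`. -/
noncomputable def contrCl (X Y : Finset E) : Finset E :=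
  (Finset.univ \ X).filter fun e =>
    S.ContrCentral X (insert e Y) ∧ S.contrR X (insert e Y) = S.contrR X Y

/-- The flats of the contraction `𝒞/X`: central sets of `𝒞/X` fixed by its closure. -/
noncomputable def contrFlats (X : Finset E) : Finset (Finset E) :=
  (Finset.univ \ X).powerset.filter fun Y => Y ∪ X ∈ S.C ∧ S.contrCl X Y = Y

end Semimatroid

/-!
A subset of `E \ X` is determined by its union with `X`, so everything reduces to comparing the
flats. For `Y` disjoint from `X`, the ranks in `𝒞/X` are those in `𝒞` shifted by the constant `r X`,
so the closure of `Y` in `𝒞/X` is the closure of `Y ∪ X` in `𝒞` with `X` removed. Hence `Y` is a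
flat of `𝒞/X` exactly when `Y ∪ X` is a flat of `𝒞`.
-/

namespace Semimatroid

variable {E : Type*} [DecidableEq E] [Fintype E] (S : Semimatroid E) {X Y Z : Finset E}

theorem subset_cl (hX : X ∈ S.C) : X ⊆ S.cl X := by
  intro e he
  simp [cl, Finset.insert_eq_of_mem he, hX]

theorem mem_flats : X ∈ S.flats ↔ X ∈ S.C ∧ S.cl X = X :=
  Finset.mem_filter

theorem contrCentral_iff : S.ContrCentral X Y ↔ Disjoint Y X ∧ Y ∪ X ∈ S.C := by
  simp only [ContrCentral, Finset.subset_sdiff, Finset.subset_univ, true_and]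

theorem contrR_eq_contrR_iff (hY : Y ∪ X ∈ S.C) (hZ : Z ∪ X ∈ S.C) :
    S.contrR X Y = S.contrR X Z ↔ S.r (Y ∪ X) = S.r (Z ∪ X) := by
  have hX : X ∈ S.C := S.mem_of_subset hY Finset.subset_union_right
  exact tsub_left_inj (S.r_mono hX hY Finset.subset_union_right)
    (S.r_mono hX hZ Finset.subset_union_right)

theorem contrCl_eq_cl_sdiff (hYX : Disjoint Y X) : S.contrCl X Y = S.cl (Y ∪ X) \ X := by
  ext e
  by_cases he : e ∈ X
  · simp [contrCl, he]
  · have hdisj : Disjoint (insert e Y) X := Finset.disjoint_insert_left.2 ⟨he, hYX⟩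
    simp only [contrCl, cl, Finset.mem_filter, Finset.mem_sdiff, Finset.mem_univ, he,
      contrCentral_iff, hdisj, true_and, and_true, not_false_eq_true, ← Finset.insert_union]
    refine and_congr_right fun heC => S.contrR_eq_contrR_iff heC ?_
    exact S.mem_of_subset heC (Finset.union_subset_union_left (Finset.subset_insert e Y))

theorem contrCl_eq_self_iff (hYX : Disjoint Y X) (hYC : Y ∪ X ∈ S.C) :
    S.contrCl X Y = Y ↔ S.cl (Y ∪ X) = Y ∪ X := by
  have hX : X ⊆ S.cl (Y ∪ X) := Finset.subset_union_right.trans (S.subset_cl hYC)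
  rw [S.contrCl_eq_cl_sdiff hYX]
  constructor
  · intro h
    rw [← Finset.sdiff_union_of_subset hX, h]
  · intro h
    rw [h, Finset.union_sdiff_cancel_right hYX]

theorem mem_contrFlats : Y ∈ S.contrFlats X ↔ Disjoint Y X ∧ Y ∪ X ∈ S.flats := by
  simp only [contrFlats, mem_flats, Finset.mem_filter, Finset.mem_powerset, Finset.subset_sdiff,
    Finset.subset_univ, true_and]
  exact and_congr_right fun hYX => and_congr_right fun hYC => S.contrCl_eq_self_iff hYX hYC

theorem sdiff_mem_contrFlats (hZ : Z ∈ S.flats) (hXZ : X ⊆ Z) : Z \ X ∈ S.contrFlats X := by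
  rw [mem_contrFlats, Finset.sdiff_union_of_subset hXZ]
  exact ⟨Finset.sdiff_disjoint, hZ⟩

theorem contraction_flats_orderIso_general (X : Finset E) :
    (∀ Y ∈ S.contrFlats X, Y ∪ X ∈ S.flats ∧ X ⊆ Y ∪ X) ∧
    (∀ Z ∈ S.flats, X ⊆ Z → ∃! Y, Y ∈ S.contrFlats X ∧ Y ∪ X = Z) ∧
    (∀ Y₁ ∈ S.contrFlats X, ∀ Y₂ ∈ S.contrFlats X, (Y₁ ⊆ Y₂ ↔ Y₁ ∪ X ⊆ Y₂ ∪ X)) := by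
  have disjoint_of_mem {Y : Finset E} (hY : Y ∈ S.contrFlats X) : Disjoint Y X :=
    (S.mem_contrFlats.1 hY).1
  refine ⟨fun Y hY => ⟨(S.mem_contrFlats.1 hY).2, Finset.subset_union_right⟩,
    fun Z hZ hXZ => ⟨Z \ X, ?_, ?_⟩, fun Y₁ hY₁ Y₂ _ => ⟨?_, ?_⟩⟩
  · exact ⟨S.sdiff_mem_contrFlats hZ hXZ, Finset.sdiff_union_of_subset hXZ⟩
  · rintro Y ⟨hY, rfl⟩
    exact (Finset.union_sdiff_cancel_right (disjoint_of_mem hY)).symm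
  · exact Finset.union_subset_union_left
  · intro h
    exact (disjoint_of_mem hY₁).left_le_of_le_sup_right (Finset.subset_union_left.trans h)

end Semimatroid

/-- For a flat `X` of a semimatroid `𝒞`, the map `Y ↦ Y ∪ X` is an order
isomorphism from the poset `ℒ(𝒞/X)` of flats of the contraction onto the poset of flats of
`𝒞` containing `X`, both ordered by inclusion. -/
theorem Semimatroid.contraction_flats_orderIso
    {E : Type*} [DecidableEq E] [Fintype E] (S : Semimatroid E)
    (X : Finset E) (hX : X ∈ S.flats) :
    (∀ Y ∈ S.contrFlats X, Y ∪ X ∈ S.flats ∧ X ⊆ Y ∪ X) ∧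
    (∀ Z ∈ S.flats, X ⊆ Z → ∃! Y, Y ∈ S.contrFlats X ∧ Y ∪ X = Z) ∧
    (∀ Y₁ ∈ S.contrFlats X, ∀ Y₂ ∈ S.contrFlats X, (Y₁ ⊆ Y₂ ↔ Y₁ ∪ X ⊆ Y₂ ∪ X)) :=
  S.contraction_flats_orderIso_general X
end
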